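/- arXiv:2206.12182 — 2 statements merged into one kernel-verified Lean document; each statement's English description precedes it below -/
import Mathlib

section
/- Let Γ be a finite simple graph and let G = G(Γ) be the associated right-angled Artin group. Let N be a finitely generated full normal subgroup of G. Then G/N is both abelian-by-finite and finite-by-abelian; in particular, G/N is virtually abelian. -/
/-- The defining relators of a right-angled Artin group: commutators of generators
corresponding to adjacent vertices. -/
def raagRels {V : Type} (Γ : SimpleGraph V) : Set (FreeGroup V) :=
  { r | ∃ v w : V, Γ.Adj v w ∧
      r = FreeGroup.of v * FreeGroup.of w * (FreeGroup.of v)⁻¹ * (FreeGroup.of w)⁻¹ }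

/-- The right-angled Artin group associated to the simple graph `Γ`. -/
abbrev RAAG {V : Type} (Γ : SimpleGraph V) : Type := PresentedGroup (raagRels Γ)

/-- The subgroup `G(Δ)` of the RAAG generated by the vertices in the set `S`. -/
def raagVertexSubgroup {V : Type} (Γ : SimpleGraph V) (S : Set V) : Subgroup (RAAG Γ) :=
  Subgroup.closure { x | ∃ v ∈ S, x = PresentedGroup.of (rels := raagRels Γ) v }

/-- A set of vertices `S` is a join of two (nonempty) subgraphs if it can be split into
two nonempty pieces every two vertices of which (one from each piece) are adjacent. -/
def IsJoinOfTwo {V : Type} (Γ : SimpleGraph V) (S : Set V) : Prop :=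
  ∃ A B : Set V, A.Nonempty ∧ B.Nonempty ∧ Disjoint A B ∧ A ∪ B = S ∧
    ∀ a ∈ A, ∀ b ∈ B, Γ.Adj a b

/-- `P : Fin k → Set V` is a join decomposition of `Γ` into join-indecomposable pieces. -/
def IsJoinDecomposition {V : Type} (Γ : SimpleGraph V) {k : ℕ} (P : Fin k → Set V) : Prop :=
  (∀ i, (P i).Nonempty) ∧ (∀ v : V, ∃! i, v ∈ P i) ∧
    (∀ i j, i ≠ j → ∀ a ∈ P i, ∀ b ∈ P j, Γ.Adj a b) ∧
    (∀ i, ¬ IsJoinOfTwo Γ (P i))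

/-- A subgroup `N` of the RAAG is full if for a join decomposition of `Γ` into
join-indecomposable pieces `Γ_1, …, Γ_k`, `N` intersects each `G(Γ_i)` nontrivially. -/
def IsFullSubgroup {V : Type} (Γ : SimpleGraph V) (N : Subgroup (RAAG Γ)) : Prop :=
  ∀ (k : ℕ) (P : Fin k → Set V), IsJoinDecomposition Γ P →
    ∀ i, N ⊓ raagVertexSubgroup Γ (P i) ≠ ⊥

/-- A group is abelian-by-finite if it has an abelian normal subgroup of finite index. -/
def AbelianByFinite (Q : Type) [Group Q] : Prop :=
  ∃ A : Subgroup Q, A.Normal ∧ A.FiniteIndex ∧ ∀ x y : A, x * y = y * x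

/-- A group is finite-by-abelian if it has a finite normal subgroup with abelian quotient,
equivalently a finite normal subgroup containing all commutators. -/
def FiniteByAbelian (Q : Type) [Group Q] : Prop :=
  ∃ F : Subgroup Q, F.Normal ∧ Finite F ∧ ∀ x y : Q, x * y * x⁻¹ * y⁻¹ ∈ F


section AbstractCocycle

variable {G X : Type} [Group G] [MulAction G X]

/-- The action of `G` on the permutation module `ℤ[X]`. -/
noncomputable def act (g : G) : (X →₀ ℤ) ≃+ (X →₀ ℤ) := Finsupp.domCongr (MulAction.toPerm g)

theorem act_apply (g : G) (x : X →₀ ℤ) (e : X) : act g x e = x (g⁻¹ • e) := by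
  simp [act, Finsupp.equivMapDomain_apply]

theorem act_single (g : G) (e : X) (r : ℤ) :
    act g (Finsupp.single e r) = Finsupp.single (g • e) r := by
  simp [act, Finsupp.equivMapDomain_single]

theorem act_one (x : X →₀ ℤ) : act (1 : G) x = x := by
  ext e; simp [act_apply]

theorem act_mul (g h : G) (x : X →₀ ℤ) : act (g * h) x = act g (act h x) := by
  ext e; simp [act_apply, mul_smul]

/-- A cocycle with values in the permutation module. -/
def IsCoc (D : G → (X →₀ ℤ)) : Prop :=
  ∀ g h, D (g * h) = D g + act g (D h)

theorem IsCoc.one {D : G → (X →₀ ℤ)} (hD : IsCoc D) : D 1 = 0 := by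
  have := hD 1 1
  simpa [act_one] using this

theorem IsCoc.inv {D : G → (X →₀ ℤ)} (hD : IsCoc D) (g : G) :
    D g⁻¹ = - act g⁻¹ (D g) := by
  have := hD g⁻¹ g
  rw [inv_mul_cancel, hD.one] at this
  exact eq_neg_of_add_eq_zero_left this.symm

/-- `O` is good if the cocycle restricted to `N` is cohomologous to one supported in `O`. -/
def GoodSet (N : Subgroup G) (D : G → (X →₀ ℤ)) (O : Set X) : Prop :=
  (∀ n ∈ N, ∀ e ∈ O, n • e ∈ O) ∧
    ∃ c : X →₀ ℤ, ∀ n ∈ N, ∀ e, e ∉ O → (D n + act n c - c) e = 0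

theorem GoodSet.inter {N : Subgroup G} {D : G → (X →₀ ℤ)} {O O' : Set X}
    (h : GoodSet N D O) (h' : GoodSet N D O') : GoodSet N D (O ∩ O') := by
  classical
  obtain ⟨hO, c, hc⟩ := h
  obtain ⟨hO', c', hc'⟩ := h'
  refine ⟨fun n hn e he => ⟨hO n hn e he.1, hO' n hn e he.2⟩, ?_⟩
  -- outside O use c, on O use c'
  refine ⟨c.filter (· ∉ O) + c'.filter (· ∈ O), ?_⟩
  intro n hn e he
  have key : ∀ e, (n⁻¹ • e ∈ O ↔ e ∈ O) := fun e =>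
    ⟨fun h => by simpa using hO n hn _ h, fun h => hO _ (N.inv_mem hn) _ h⟩
  by_cases h1 : e ∈ O
  · have h2 : e ∉ O' := fun h => he ⟨h1, h⟩
    have := hc' n hn e h2
    simp only [Finsupp.sub_apply, Finsupp.add_apply, act_apply, Finsupp.filter_apply, key, h1] at this ⊢
    simpa using this
  · have := hc n hn e h1
    simp only [Finsupp.sub_apply, Finsupp.add_apply, act_apply, Finsupp.filter_apply, key, h1] at this ⊢
    simpa using this

theorem GoodSet.translate {N : Subgroup G} [N.Normal] {D : G → (X →₀ ℤ)} (hD : IsCoc D) {O : Set X}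
    (h : GoodSet N D O) (g : G) : GoodSet N D {e | g⁻¹ • e ∈ O} := by
  obtain ⟨hO, c, hc⟩ := h
  refine ⟨fun n hn e he => ?_, D g + act g c, ?_⟩
  · have := hO (g⁻¹ * n * g) (by simpa using (inferInstance : N.Normal).conj_mem n hn g⁻¹) _ he
    simpa [smul_smul, mul_assoc] using this
  · intro n hn e he
    have := hc (g⁻¹ * n * g) (by simpa using (inferInstance : N.Normal).conj_mem n hn g⁻¹) _ he
    rw [hD, hD, hD.inv] at this
    simp only [Finsupp.sub_apply, Finsupp.add_apply, Finsupp.neg_apply, map_add, act_apply, smul_smul] at this ⊢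
    simp [mul_assoc] at this ⊢
    linarith

theorem goodSet_init {N : Subgroup G} (hfg : N.FG) {D : G → (X →₀ ℤ)} (hD : IsCoc D) :
    ∃ O : Set X, GoodSet N D O ∧
      ((Quotient.mk (MulAction.orbitRel N X)) '' O).Finite := by
  classical
  obtain ⟨S, hS⟩ := hfg
  let E : Finset X := S.biUnion fun s => (D s).support
  let O : Set X := {e | ∃ n ∈ N, n • e ∈ E}
  have hO : ∀ n ∈ N, ∀ e ∈ O, n • e ∈ O := by
    rintro n hn e ⟨m, hm, h⟩
    exact ⟨m * n⁻¹, N.mul_mem hm (N.inv_mem hn), by simpa [smul_smul] using h⟩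
  have hO' : ∀ n ∈ N, ∀ e, e ∉ O → n • e ∉ O := by
    intro n hn e he h
    exact he (by simpa using hO n⁻¹ (N.inv_mem hn) _ h)
  refine ⟨O, ⟨hO, 0, ?_⟩, ?_⟩
  · have : ∀ n, (hn : n ∈ Subgroup.closure (S : Set G)) → ∀ e, e ∉ O → D n e = 0 := by
      intro n hn
      induction hn using Subgroup.closure_induction with
      | mem x hx =>
        intro e he
        by_contra h
        exact he ⟨1, N.one_mem, by
          simp only [one_smul, E, Finset.mem_biUnion]
          exact ⟨x, hx, by simpa using h⟩⟩
      | one => intro e he; simp [hD.one]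
      | mul x y hx hy h1 h2 =>
        intro e he
        rw [hS] at hx hy
        rw [hD x y]
        simp [act_apply, h1 e he, h2 _ (hO' _ (N.inv_mem hx) e he)]
      | inv x hx h1 =>
        intro e he
        rw [hS] at hx
        simp [hD.inv, act_apply, h1 _ (hO' _ hx e he)]
    intro n hn e he
    simpa using this n (hS ▸ hn) e he
  · refine ((E.finite_toSet).image (Quotient.mk (MulAction.orbitRel N X))).subset ?_
    rintro _ ⟨e, ⟨n, hn, h⟩, rfl⟩
    exact ⟨_, h, Quotient.sound ⟨⟨n, hn⟩, rfl⟩⟩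

theorem cocycle_dichotomy [MulAction.IsPretransitive G X] {N : Subgroup G} [N.Normal] (hfg : N.FG)
    {D : G → (X →₀ ℤ)} (hD : IsCoc D) :
    Finite (Quotient (MulAction.orbitRel N X)) ∨
      ∃ c : X →₀ ℤ, ∀ n ∈ N, D n = c - act n c := by
  classical
  let π : X → Quotient (MulAction.orbitRel N X) := Quotient.mk _
  let P : ℕ → Prop := fun k => ∃ O, GoodSet N D O ∧ (π '' O).Finite ∧ (π '' O).ncard = k
  have hne : ∃ k, P k := by
    obtain ⟨O, h, h'⟩ := goodSet_init hfg hD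
    exact ⟨_, O, h, h', rfl⟩
  obtain ⟨O, hO, hfin, hcard⟩ := Nat.find_spec hne
  have hmin : ∀ O', GoodSet N D O' → O ⊆ O' := by
    intro O' hO' e he
    have hI := hO.inter hO'
    have hsub : π '' (O ∩ O') ⊆ π '' O := Set.image_mono Set.inter_subset_left
    have h1 : Nat.find hne ≤ (π '' (O ∩ O')).ncard :=
      Nat.find_min' hne ⟨_, hI, hfin.subset hsub, rfl⟩
    have h2 := Set.eq_of_subset_of_ncard_le hsub (by omega) hfin
    have h3 : π e ∈ π '' (O ∩ O') := h2 ▸ ⟨e, he, rfl⟩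
    obtain ⟨e', he', h4⟩ := h3
    obtain ⟨⟨n, hn⟩, h5⟩ := Quotient.exact h4
    have h6 : n • e = e' := h5
    have h7 := hI.1 n⁻¹ (N.inv_mem hn) e' he'
    rw [← h6, inv_smul_smul] at h7
    exact h7.2
  rcases O.eq_empty_or_nonempty with h | ⟨e, he⟩
  · right
    obtain ⟨-, c, hc⟩ := hO
    refine ⟨c, fun n hn => ?_⟩
    ext e
    have := hc n hn e (by simp [h])
    simp only [Finsupp.sub_apply, Finsupp.add_apply] at this ⊢
    linarith
  · left
    have huniv : O = Set.univ := by
      refine Set.eq_univ_of_forall fun e' => ?_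
      obtain ⟨g, rfl⟩ := MulAction.exists_smul_eq G e e'
      have := hmin _ (hO.translate hD g⁻¹) he
      simpa using this
    rw [huniv, Set.image_univ, Set.range_eq_univ.2 (Quotient.mk_surjective)] at hfin
    exact Set.finite_univ_iff.1 hfin

open Classical in
/-- Sum of the coefficients over the set `A`. -/
noncomputable def sig (A : Set X) : (X →₀ ℤ) →+ ℤ :=
  Finsupp.liftAddHom (fun e => if e ∈ A then AddMonoidHom.id ℤ else 0)

theorem sig_single_mem {A : Set X} {e : X} (h : e ∈ A) (r : ℤ) : sig A (Finsupp.single e r) = r := by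
  simp [sig, h]

theorem sig_single_not_mem {A : Set X} {e : X} (h : e ∉ A) (r : ℤ) :
    sig A (Finsupp.single e r) = 0 := by
  simp [sig, h]

theorem sig_act (A : Set X) (g : G) (x : X →₀ ℤ) : sig A (act g x) = sig {e | g • e ∈ A} x := by
  induction x using Finsupp.induction_linear with
  | zero => simp
  | add f g hf hg => simp [hf, hg]
  | single a b => rw [act_single]; simp [sig]

theorem sig_bound (A : Set X) (x : X →₀ ℤ) : |sig A x| ≤ ∑ e ∈ x.support, |x e| := by
  classical
  rw [sig, Finsupp.liftAddHom_apply, Finsupp.sum]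
  refine (Finset.abs_sum_le_sum_abs _ _).trans (Finset.sum_le_sum fun e _ => ?_)
  split_ifs <;> simp

theorem coboundary_line {N : Subgroup G} [N.Normal] {D : G → (X →₀ ℤ)} (hD : IsCoc D)
    {c : X →₀ ℤ} (hc : ∀ n ∈ N, D n = c - act n c) {v : G} {x₀ : X}
    (hv : D v = Finsupp.single x₀ 1) {n : G} (hn : n ∈ N) :
    ∃ i j : ℕ, n • v ^ i • x₀ = v ^ j • x₀ := by
  by_contra! hcon
  have hinv : ∀ g : G, act n (act g c + D g - c) = act g c + D g - c := by
    intro g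
    have h1 := hc (g⁻¹ * n * g) (by simpa using (inferInstance : N.Normal).conj_mem n hn g⁻¹)
    have h2 := hc n hn
    rw [hD, hD, hD.inv] at h1
    have h3 := congrArg (act g) h1
    ext e
    have h4 := DFunLike.congr_fun h3 e
    have h5 := DFunLike.congr_fun h2 e
    simp [map_add, map_sub, act_apply, smul_smul, mul_assoc] at h4 h5 ⊢
    linarith
  let L : Set X := {e | ∃ i : ℕ, e = v ^ i • x₀}
  have hDL : ∀ k : ℕ, sig L (D (v ^ k)) = k := by
    intro k
    induction k with
    | zero => simp [hD.one]
    | succ k ih =>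
      rw [pow_succ, hD, map_add, ih, hv, act_single, sig_single_mem (show v ^ k • x₀ ∈ L from ⟨k, rfl⟩)]; simp
  have hDL' : ∀ k : ℕ, sig {e | n • e ∈ L} (D (v ^ k)) = 0 := by
    intro k
    induction k with
    | zero => simp [hD.one]
    | succ k ih =>
      rw [pow_succ, hD, map_add, ih, hv, act_single, sig_single_not_mem]; · simp
      rintro ⟨i, hi⟩
      exact hcon k i hi
  set B := ∑ e ∈ c.support, |c e| with hB
  have hB0 : 0 ≤ B := Finset.sum_nonneg fun _ _ => abs_nonneg _
  have hk := congrArg (sig L) (hinv (v ^ (4 * B.toNat + 1)))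
  rw [sig_act] at hk
  simp only [map_add, map_sub, hDL, hDL'] at hk
  simp only [sig_act] at hk
  have b1 := abs_le.1 (sig_bound {e | v ^ (4 * B.toNat + 1) • e ∈ {e | n • e ∈ L}} c)
  have b2 := abs_le.1 (sig_bound {e | n • e ∈ L} c)
  have b3 := abs_le.1 (sig_bound {e | v ^ (4 * B.toNat + 1) • e ∈ L} c)
  have b4 := abs_le.1 (sig_bound L c)
  rw [← hB] at b1 b2 b3 b4
  push_cast at hk
  rw [Int.toNat_of_nonneg hB0] at hk
  simp only [Set.mem_ofPred_eq] at b1 b2 b3 b4 hk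
  linarith [b1.1, b1.2, b2.1, b2.2, b3.1, b3.2, b4.1, b4.2]

end AbstractCocycle

section RAAGpart

variable {V : Type} (Γ : SimpleGraph V)

/-- The generator attached to a vertex. -/
abbrev gen (v : V) : RAAG Γ := PresentedGroup.of (rels := raagRels Γ) v

theorem gen_comm {v w : V} (h : Γ.Adj v w) : gen Γ v * gen Γ w = gen Γ w * gen Γ v := by
  have : PresentedGroup.mk (raagRels Γ)
      (FreeGroup.of v * FreeGroup.of w * (FreeGroup.of v)⁻¹ * (FreeGroup.of w)⁻¹) = 1 :=
    PresentedGroup.one_of_mem ⟨v, w, h, rfl⟩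
  simp only [map_mul, map_inv] at this
  rw [mul_inv_eq_one, mul_inv_eq_iff_eq_mul] at this
  exact this

/-- Universal property of the RAAG. -/
theorem exists_raag_hom {H : Type} [Group H] (f : V → H)
    (hf : ∀ v w, Γ.Adj v w → f v * f w = f w * f v) :
    ∃ φ : RAAG Γ →* H, ∀ v, φ (gen Γ v) = f v := by
  refine ⟨PresentedGroup.toGroup (f := f) ?_, fun v => PresentedGroup.toGroup.of _⟩
  rintro r ⟨v, w, h, rfl⟩
  simp only [map_mul, map_inv, FreeGroup.lift_apply_of]
  rw [hf v w h]; group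

theorem gen_mem {S : Set V} {v : V} (h : v ∈ S) : gen Γ v ∈ raagVertexSubgroup Γ S :=
  Subgroup.subset_closure ⟨v, h, rfl⟩

theorem vertexSubgroup_le {S : Set V} {H : Subgroup (RAAG Γ)} (h : ∀ v ∈ S, gen Γ v ∈ H) :
    raagVertexSubgroup Γ S ≤ H := by
  refine (Subgroup.closure_le _).2 ?_
  rintro _ ⟨v, hv, rfl⟩
  exact h v hv

theorem vertexSubgroup_mono {S T : Set V} (h : S ⊆ T) :
    raagVertexSubgroup Γ S ≤ raagVertexSubgroup Γ T :=
  vertexSubgroup_le Γ fun _ hv => gen_mem Γ (h hv)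

theorem raag_generated (H : Subgroup (RAAG Γ)) (h : ∀ v, gen Γ v ∈ H) (g : RAAG Γ) : g ∈ H :=
  PresentedGroup.generated_by _ H h g

theorem vertexSubgroup_empty {g : RAAG Γ} (h : g ∈ raagVertexSubgroup Γ ∅) : g = 1 := by
  have := vertexSubgroup_le Γ (S := ∅) (H := ⊥) (by simp) h
  simpa using this

theorem vertexSubgroup_inter {S T : Set V} {g : RAAG Γ} (hS : g ∈ raagVertexSubgroup Γ S)
    (hT : g ∈ raagVertexSubgroup Γ T) : g ∈ raagVertexSubgroup Γ (S ∩ T) := by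
  classical
  obtain ⟨φ, hφ⟩ := exists_raag_hom Γ (fun v => if v ∈ S then gen Γ v else 1) (by
    intro v w h
    have := gen_comm Γ h
    split_ifs <;> simp [this])
  have h1 : φ g = g := by
    have : raagVertexSubgroup Γ S ≤ φ.eqLocus (MonoidHom.id _) :=
      vertexSubgroup_le Γ fun v hv => by
        change φ (gen Γ v) = gen Γ v
        rw [hφ, if_pos hv]
    exact this hS
  have h2 : raagVertexSubgroup Γ T ≤ (raagVertexSubgroup Γ (S ∩ T)).comap φ :=
    vertexSubgroup_le Γ fun v hv => by
      rw [Subgroup.mem_comap, hφ]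
      split_ifs with h
      · exact gen_mem Γ ⟨h, hv⟩
      · exact one_mem _
  have := h2 hT
  rwa [Subgroup.mem_comap, h1] at this

/-- The subgroup generated by the link of `v`. -/
abbrev lkG (v : V) : Subgroup (RAAG Γ) := raagVertexSubgroup Γ (Γ.neighborSet v)

theorem lkG_comm (v : V) {g : RAAG Γ} (h : g ∈ lkG Γ v) : gen Γ v * g = g * gen Γ v := by
  have : lkG Γ v ≤ Subgroup.centralizer {gen Γ v} := vertexSubgroup_le Γ fun w hw => by
    rw [Subgroup.mem_centralizer_singleton_iff]
    exact (gen_comm Γ hw).symm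
  have := this h
  rw [Subgroup.mem_centralizer_singleton_iff] at this
  exact this.symm

/-- The Fox-type derivation attached to the vertex `v`. -/
theorem exists_derivation (v : V) : ∃ D : RAAG Γ → ((RAAG Γ ⧸ lkG Γ v) →₀ ℤ), IsCoc D ∧
    D (gen Γ v) = Finsupp.single ((1 : RAAG Γ) : RAAG Γ ⧸ lkG Γ v) 1 ∧
    ∀ w, w ≠ v → D (gen Γ w) = 0 := by
  classical
  let x₀ : RAAG Γ ⧸ lkG Γ v := ((1 : RAAG Γ) : RAAG Γ ⧸ lkG Γ v)
  let t : V → ((RAAG Γ ⧸ lkG Γ v) →₀ ℤ) := fun w => if w = v then Finsupp.single x₀ 1 else 0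
  have hx : ∀ w, Γ.Adj v w → gen Γ w • x₀ = x₀ := by
    intro w h
    change ((gen Γ w * 1 : RAAG Γ) : RAAG Γ ⧸ lkG Γ v) = ((1 : RAAG Γ) : RAAG Γ ⧸ lkG Γ v)
    rw [eq_comm, QuotientGroup.eq]
    simpa using gen_mem Γ (S := Γ.neighborSet v) h
  have ht : ∀ u w, Γ.Adj u w → t u + act (gen Γ u) (t w) = t w + act (gen Γ w) (t u) := by
    intro u w h
    by_cases h1 : u = v
    · subst h1
      have h2 : w ≠ u := h.ne'
      simp [t, h2, act_single, hx w h]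
    · by_cases h2 : w = v
      · subst h2
        simp [t, h1, act_single, hx u h.symm]
      · simp [t, h1, h2]
  obtain ⟨φ, hφ⟩ := exists_raag_hom Γ
    (fun w => ((act (gen Γ w)).toEquiv.trans (Equiv.addLeft (t w)) :
      Equiv.Perm ((RAAG Γ ⧸ lkG Γ v) →₀ ℤ))) (by
      intro u w h
      refine Equiv.ext fun x => ?_
      have h1 := ht u w h
      have h2 := act_mul (gen Γ u) (gen Γ w) x
      rw [gen_comm Γ h, act_mul] at h2
      simp only [Equiv.Perm.mul_apply, Equiv.trans_apply, Equiv.coe_addLeft]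
      change t u + act (gen Γ u) (t w + act (gen Γ w) x) =
        t w + act (gen Γ w) (t u + act (gen Γ u) x)
      rw [map_add, map_add, ← add_assoc, ← add_assoc, h1, h2])
  have hφ' : ∀ w x, φ (gen Γ w) x = t w + act (gen Γ w) x := by
    intro w x; rw [hφ]; rfl
  have key : ∀ g x, φ g x = φ g 0 + act g x := by
    let H : Subgroup (RAAG Γ) :=
      { carrier := {g | ∀ x, φ g x = φ g 0 + act g x}
        one_mem' := by intro x; simp [act_one]
        mul_mem' := by
          intro a b ha hb x
          rw [map_mul, Equiv.Perm.mul_apply, Equiv.Perm.mul_apply, ha, ha (φ b 0), hb x, map_add,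
            act_mul, add_assoc]
        inv_mem' := by
          intro a ha x
          rw [map_inv, Equiv.Perm.inv_eq_iff_eq, ha, map_add, ← act_mul, mul_inv_cancel, act_one,
            ← add_assoc, ← ha]
          simp }
    intro g
    refine raag_generated Γ H (fun w x => ?_) g
    rw [hφ', hφ' w 0]; simp
  refine ⟨fun g => φ g 0, ?_, ?_, ?_⟩
  · intro g h
    change φ (g * h) 0 = φ g 0 + act g (φ h 0)
    rw [map_mul, Equiv.Perm.mul_apply, key]
  · change φ (gen Γ v) 0 = _
    rw [hφ']; simp [t, x₀]
  · intro w hw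
    change φ (gen Γ w) 0 = _
    rw [hφ']; simp [t, hw]

/-- The Britton-type lemma. -/
theorem conj_inter {S : Set V} {w : V} (hw : w ∉ S) {g g' : RAAG Γ}
    (hg : g ∈ raagVertexSubgroup Γ S) (hg' : g' ∈ raagVertexSubgroup Γ S)
    (h : gen Γ w * g' = g * gen Γ w) : g ∈ raagVertexSubgroup Γ (S ∩ Γ.neighborSet w) := by
  obtain ⟨D, hD, h1, h2⟩ := exists_derivation Γ w
  have hz : ∀ a ∈ raagVertexSubgroup Γ S, D a = 0 := by
    intro a ha
    let H : Subgroup (RAAG Γ) :=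
      { carrier := {g | D g = 0}
        one_mem' := hD.one
        mul_mem' := by
          intro a b ha hb
          have ha : D a = 0 := ha
          have hb : D b = 0 := hb
          change D (a * b) = 0
          rw [hD, ha, hb]; simp
        inv_mem' := by
          intro a ha
          have ha : D a = 0 := ha
          change D a⁻¹ = 0
          rw [hD.inv, ha]; simp }
    exact vertexSubgroup_le Γ (H := H) (fun v hv => h2 v (fun e => hw (e ▸ hv))) ha
  have h3 := congrArg D h
  rw [hD, hD, hz _ hg, hz _ hg', h1, act_single] at h3
  simp only [map_zero, add_zero, zero_add] at h3
  have h4 := (Finsupp.single_left_inj (one_ne_zero)).1 h3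
  refine vertexSubgroup_inter Γ hg ?_
  have h5 : ((1 : RAAG Γ) : RAAG Γ ⧸ lkG Γ w) = ((g * 1 : RAAG Γ) : RAAG Γ ⧸ lkG Γ w) := h4
  rw [QuotientGroup.eq] at h5
  simpa using h5

/-- A normal subgroup meeting `G(P)` inside `G(S)` with `S` proper in the join-irreducible `P`
meets `G(P)` trivially. -/
theorem trivial_of_proper [Finite V] {P : Set V} (hP : ¬ IsJoinOfTwo Γ P) (N : Subgroup (RAAG Γ))
    [N.Normal] (S : Set V) (hS : S ⊂ P)
    (h : N ⊓ raagVertexSubgroup Γ P ≤ raagVertexSubgroup Γ S) :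
    N ⊓ raagVertexSubgroup Γ P = ⊥ := by
  induction hk : S.ncard using Nat.strong_induction_on generalizing S with
  | _ k ih =>
    by_cases hall : ∀ w ∈ P \ S, S ⊆ Γ.neighborSet w
    · rcases S.eq_empty_or_nonempty with h0 | h0
      · subst h0
        rw [eq_bot_iff]
        intro g hg
        simpa using vertexSubgroup_empty Γ (h hg)
      · exact (hP ⟨S, P \ S, h0, Set.nonempty_of_ssubset hS, Set.disjoint_sdiff_right,
          Set.union_sdiff_cancel hS.1, fun a ha b hb => (hall b hb ha).symm⟩).elim
    · push Not at hall
      obtain ⟨w, ⟨hwP, hwS⟩, hnot⟩ := hall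
      have hss : S ∩ Γ.neighborSet w ⊂ S :=
        ⟨Set.inter_subset_left, fun hh => hnot fun x hx => (hh hx).2⟩
      refine ih _ ?_ (S ∩ Γ.neighborSet w) (hss.trans hS) ?_ rfl
      · rw [← hk]; exact Set.ncard_lt_ncard hss (Set.toFinite _)
      · intro g hg
        have hw := gen_mem Γ hwP
        refine conj_inter Γ hwS (g := g) (g' := (gen Γ w)⁻¹ * g * gen Γ w) (h hg) (h ⟨?_, ?_⟩)
          (by group)
        · simpa using (inferInstance : N.Normal).conj_mem g hg.1 (gen Γ w)⁻¹
        · exact Subgroup.mul_mem _ (Subgroup.mul_mem _ (Subgroup.inv_mem _ hw) hg.2) hw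

theorem exists_decomposition [Finite V] :
    ∃ (k : ℕ) (P : Fin k → Set V), IsJoinDecomposition Γ P := by
  classical
  obtain ⟨k, ⟨e⟩⟩ := Finite.exists_equiv_fin (Γᶜ).ConnectedComponent
  refine ⟨k, fun i => (e.symm i).supp, ?_, ?_, ?_, ?_⟩
  · intro i; exact (e.symm i).nonempty_supp
  · intro v
    refine ⟨e (Γᶜ.connectedComponentMk v), by simp, ?_⟩
    intro i hi
    rw [SimpleGraph.ConnectedComponent.mem_supp_iff] at hi
    rw [hi]; simp
  · intro i j hij a ha b hb
    rw [SimpleGraph.ConnectedComponent.mem_supp_iff] at ha hb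
    by_contra hadj
    apply hij
    apply e.symm.injective
    rw [← ha, ← hb, SimpleGraph.ConnectedComponent.eq]
    by_cases hab : a = b
    · subst hab; rfl
    · exact SimpleGraph.Adj.reachable ((SimpleGraph.compl_adj _ _ _).2 ⟨hab, hadj⟩)
  · rintro i ⟨A, B, ⟨a, ha⟩, ⟨b, hb⟩, hdis, hun, hadj⟩
    have hun : A ∪ B = (e.symm i).supp := hun
    have hA : ∀ x ∈ A, Γᶜ.connectedComponentMk x = e.symm i := fun x hx => by
      have : x ∈ (e.symm i).supp := hun ▸ Or.inl hx
      exact this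
    have hb' : Γᶜ.connectedComponentMk b = e.symm i := by
      have : b ∈ (e.symm i).supp := hun ▸ Or.inr hb
      exact this
    have hr : Γᶜ.Reachable a b := by
      rw [← SimpleGraph.ConnectedComponent.eq, hA a ha, hb']
    obtain ⟨p⟩ := hr
    have : ∀ x y, Γᶜ.Walk x y → x ∈ A → y ∈ A := by
      intro x y q
      induction q with
      | nil => exact id
      | @cons x z y hxz q ih =>
        intro hx
        apply ih
        have hz : z ∈ A ∪ B := by
          rw [hun, SimpleGraph.ConnectedComponent.mem_supp_iff, ← hA x hx]
          exact SimpleGraph.ConnectedComponent.eq.2 hxz.reachable.symm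
        rcases hz with hz | hz
        · exact hz
        · exact absurd (hadj x hx z hz) ((SimpleGraph.compl_adj _ _ _).1 hxz).2
    exact Set.disjoint_left.1 hdis (this a b p ha) hb

/-- The key step: the centralizer of each generator has finite index in the quotient. -/
theorem centralizer_finiteIndex [Finite V] (N : Subgroup (RAAG Γ)) [N.Normal]
    (hfg : N.FG) (hfull : IsFullSubgroup Γ N) (v : V) :
    (Subgroup.centralizer {(QuotientGroup.mk' N) (gen Γ v)}).FiniteIndex := by
  classical
  obtain ⟨k, P, hPd⟩ := exists_decomposition Γ
  have hfull' := hfull k P hPd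
  obtain ⟨-, hP2, hP3, hP4⟩ := hPd
  obtain ⟨i, hvi, hi⟩ := hP2 v
  by_cases hcen : ∀ w, w ≠ v → Γ.Adj v w
  · have : Subgroup.centralizer {(QuotientGroup.mk' N) (gen Γ v)} = ⊤ := by
      rw [eq_top_iff]
      intro q _
      obtain ⟨g, rfl⟩ := QuotientGroup.mk'_surjective N q
      have : g ∈ Subgroup.centralizer {gen Γ v} := by
        refine raag_generated Γ _ (fun w => ?_) g
        rw [Subgroup.mem_centralizer_singleton_iff]
        by_cases hw : w = v
        · rw [hw]
        · exact (gen_comm Γ (hcen w hw)).symm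
      rw [Subgroup.mem_centralizer_singleton_iff] at this ⊢
      rw [← map_mul, this, map_mul]
    rw [this]; infer_instance
  obtain ⟨D, hD, hDv, -⟩ := exists_derivation Γ v
  rcases cocycle_dichotomy hfg hD with hfin | ⟨c, hc⟩
  · let C' : Subgroup (RAAG Γ ⧸ N) := (lkG Γ v).map (QuotientGroup.mk' N)
    have hle : C' ≤ Subgroup.centralizer {(QuotientGroup.mk' N) (gen Γ v)} := by
      rintro _ ⟨g, hg, rfl⟩
      rw [Subgroup.mem_centralizer_singleton_iff, ← map_mul, ← map_mul, lkG_comm Γ v hg]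
    have hfi : C'.FiniteIndex := by
      let f : (RAAG Γ ⧸ lkG Γ v) → ((RAAG Γ ⧸ N) ⧸ C') :=
        Quotient.map' (QuotientGroup.mk' N) (by
          intro a b hab
          rw [QuotientGroup.leftRel_apply] at hab ⊢
          exact ⟨_, hab, by simp⟩)
      have hf : ∀ g : RAAG Γ, f (g : RAAG Γ ⧸ lkG Γ v) =
        ((QuotientGroup.mk' N g : RAAG Γ ⧸ N) : (RAAG Γ ⧸ N) ⧸ C') := fun g => rfl
      let F : Quotient (MulAction.orbitRel N (RAAG Γ ⧸ lkG Γ v)) → ((RAAG Γ ⧸ N) ⧸ C') :=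
        Quotient.lift f (by
          rintro a b ⟨⟨n, hn⟩, rfl⟩
          obtain ⟨g, rfl⟩ := QuotientGroup.mk_surjective b
          change f ((n * g : RAAG Γ) : RAAG Γ ⧸ lkG Γ v) = f (g : RAAG Γ ⧸ lkG Γ v)
          rw [hf, hf, map_mul]
          have : QuotientGroup.mk' N n = 1 := (QuotientGroup.eq_one_iff n).2 hn
          rw [this, one_mul])
      have hF : Function.Surjective F := by
        intro q
        obtain ⟨q, rfl⟩ := QuotientGroup.mk_surjective q
        obtain ⟨g, rfl⟩ := QuotientGroup.mk'_surjective N q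
        exact ⟨Quotient.mk _ (g : RAAG Γ ⧸ lkG Γ v), rfl⟩
      have := @Finite.of_surjective _ _ hfin F hF
      exact Subgroup.finiteIndex_of_finite_quotient
    exact Subgroup.finiteIndex_of_le hle
  · exfalso
    let St : Set V := insert v (Γ.neighborSet v)
    have hN : N ≤ raagVertexSubgroup Γ St := by
      intro n hn
      obtain ⟨a, b, hab⟩ := coboundary_line hD hc hDv hn
      have h1 : ((n * (gen Γ v ^ a * 1) : RAAG Γ) : RAAG Γ ⧸ lkG Γ v) =
        ((gen Γ v ^ b * 1 : RAAG Γ) : RAAG Γ ⧸ lkG Γ v) := hab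
      rw [QuotientGroup.eq] at h1
      have h2 := vertexSubgroup_mono Γ (Set.subset_insert v _) h1
      have hv : gen Γ v ∈ raagVertexSubgroup Γ St := gen_mem Γ (Set.mem_insert _ _)
      have h3 := mul_mem (mul_mem (pow_mem hv b) (inv_mem h2)) (inv_mem (pow_mem hv a))
      convert h3 using 1
      group
    refine hfull' i (trivial_of_proper Γ (hP4 i) N (P i ∩ St) ?_ ?_)
    · refine ⟨Set.inter_subset_left, fun hh => ?_⟩
      apply hcen
      intro w hw
      by_cases hwi : w ∈ P i
      · exact ((hh hwi).2).resolve_left hw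
      · obtain ⟨j, hj, -⟩ := hP2 w
        exact hP3 i j (fun e => hwi (e ▸ hj)) v hvi w hj
    · intro g hg
      exact vertexSubgroup_inter Γ hg.2 (hN hg.1)

end RAAGpart

open scoped commutatorElement in
theorem finite_commutator_of_center {Q : Type} [Group Q] [h : (Subgroup.center Q).FiniteIndex] :
    Finite (commutator Q) := by
  have : Finite (commutatorSet Q) := by
    let f : (Q ⧸ Subgroup.center Q) × (Q ⧸ Subgroup.center Q) → Q :=
      fun p => ⁅p.1.out, p.2.out⁆
    refine (Set.finite_range f).subset ?_
    rintro _ ⟨a, b, rfl⟩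
    refine ⟨(a, b), ?_⟩
    obtain ⟨⟨x, hx⟩, hx'⟩ := QuotientGroup.mk_out_eq_mul (Subgroup.center Q) a
    obtain ⟨⟨y, hy⟩, hy'⟩ := QuotientGroup.mk_out_eq_mul (Subgroup.center Q) b
    change ⁅Quotient.out (a : Q ⧸ Subgroup.center Q), Quotient.out (b : Q ⧸ Subgroup.center Q)⁆ = _
    rw [hx', hy']
    simp only [commutatorElement_def, mul_inv_rev]
    rw [Subgroup.mem_center_iff] at hx hy
    calc a * x * (b * y) * (x⁻¹ * a⁻¹) * (y⁻¹ * b⁻¹)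
        = a * ((x * (b * y)) * x⁻¹) * a⁻¹ * y⁻¹ * b⁻¹ := by group
      _ = a * b * (y * a⁻¹) * y⁻¹ * b⁻¹ := by rw [← hx]; group
      _ = a * b * a⁻¹ * b⁻¹ := by rw [← hy]; group
  infer_instance

theorem quotient_of_RAAG_by_fg_full_normal_subgroup
    {V : Type} [Fintype V] (Γ : SimpleGraph V)
    (N : Subgroup (RAAG Γ)) [N.Normal]
    (hfg : N.FG) (hfull : IsFullSubgroup Γ N) :
    (AbelianByFinite (RAAG Γ ⧸ N) ∧ FiniteByAbelian (RAAG Γ ⧸ N)) ∧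
      ∃ A : Subgroup (RAAG Γ ⧸ N), A.FiniteIndex ∧ ∀ x y : A, x * y = y * x := by
  have hcen : (Subgroup.center (RAAG Γ ⧸ N)).FiniteIndex := by
    have h1 : (⨅ v : V, Subgroup.centralizer {(QuotientGroup.mk' N) (gen Γ v)}).FiniteIndex :=
      Subgroup.finiteIndex_iInf fun v => centralizer_finiteIndex Γ N hfg hfull v
    refine Subgroup.finiteIndex_of_le (H := ⨅ v : V,
      Subgroup.centralizer {(QuotientGroup.mk' N) (gen Γ v)}) ?_
    intro q hq
    rw [Subgroup.mem_iInf] at hq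
    rw [Subgroup.mem_center_iff]
    intro r
    obtain ⟨g, rfl⟩ := QuotientGroup.mk'_surjective N r
    have : g ∈ (Subgroup.centralizer {q}).comap (QuotientGroup.mk' N) := by
      refine raag_generated Γ _ (fun w => ?_) g
      have := hq w
      rw [Subgroup.mem_centralizer_singleton_iff] at this
      rw [Subgroup.mem_comap, Subgroup.mem_centralizer_singleton_iff]
      exact this.symm
    rw [Subgroup.mem_comap, Subgroup.mem_centralizer_singleton_iff] at this
    exact this
  have hab : ∀ x y : Subgroup.center (RAAG Γ ⧸ N), x * y = y * x := fun x y =>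
    Subtype.ext ((Subgroup.mem_center_iff.1 y.2 x))
  refine ⟨⟨⟨Subgroup.center _, inferInstance, hcen, hab⟩, ?_⟩, ⟨Subgroup.center _, hcen, hab⟩⟩
  refine ⟨commutator _, inferInstance, finite_commutator_of_center, fun x y => ?_⟩
  exact Subgroup.commutator_mem_commutator (Subgroup.mem_top x) (Subgroup.mem_top y)
end

section
/- Let Γ be a finite simple graph, let G = G(Γ) be the associated right-angled Artin group, and let N be a finitely generated full normal subgroup of G. Then N is hereditarily conjugacy separable: every finite index subgroup of N is conjugacy separable. In particular, N itself is conjugacy separable. -/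
/-- A group is conjugacy separable if any two non-conjugate elements remain non-conjugate
in some finite quotient. -/
def ConjugacySeparable (H : Type) [Group H] : Prop :=
  ∀ x y : H, ¬ IsConj x y →
    ∃ (Q : Type) (instQ : Group Q), letI := instQ
      Finite Q ∧ ∃ φ : H →* Q, ¬ IsConj (φ x) (φ y)



namespace HCS

open MonoidAlgebra in
/-- The contracted (Rees quotient) monoid algebra over `ZMod 2` of a monoid by an ideal with
finite complement. -/
theorem rees_exists {M : Type} [Monoid M] (J : Set M) (hl : ∀ a b, b ∈ J → a * b ∈ J)
    (hr : ∀ a b, a ∈ J → a * b ∈ J) (hfin : Finite (Jᶜ : Set M)) :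
    ∃ (A : Type) (_ : Ring A) (ι : M →* A), Finite A ∧ (∀ j ∈ J, ι j = 0) ∧
      (∀ a : A, a + a = 0) ∧
      (∀ p : A → Prop, p 0 → (∀ m, p (ι m)) → (∀ a b, p a → p b → p (a + b)) → ∀ a, p a) ∧
      ∀ C : Set M, (∀ m ∈ C, m ∉ J) →
        ∃ τ : A →+ ZMod 2, (∀ m ∈ C, τ (ι m) = 1) ∧ ∀ m, m ∉ C → τ (ι m) = 0 := by
  classical
  let car : Set (MonoidAlgebra (ZMod 2) M) := {f | ∀ m, m ∉ J → f.coeff m = 0}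
  have hmul : ∀ f g : MonoidAlgebra (ZMod 2) M, (f ∈ car ∨ g ∈ car) → f * g ∈ car := by
    intro f g h m hm
    by_contra hne
    have h1 : m ∈ (f * g).coeff.support := Finsupp.mem_support_iff.2 hne
    have h2 := support_coeff_mul_subset f g h1
    obtain ⟨a, ha, b, hb, rfl⟩ := Finset.mem_mul.1 h2
    rcases h with h | h
    · have : a ∈ J := by
        by_contra haJ
        exact (Finsupp.mem_support_iff.1 ha) (h a haJ)
      exact hm (hr _ _ this)
    · have : b ∈ J := by
        by_contra haJ
        exact (Finsupp.mem_support_iff.1 hb) (h b haJ)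
      exact hm (hl _ _ this)
  let I : TwoSidedIdeal (MonoidAlgebra (ZMod 2) M) := TwoSidedIdeal.mk' car (by intro m _; simp)
    (by intro x y hx hy m hm
        have h1 := hx m hm
        have h2 := hy m hm
        rw [coeff_add, Finsupp.add_apply, h1, h2, add_zero])
    (by intro x hx m hm
        have h1 := hx m hm
        rw [coeff_neg, Finsupp.neg_apply, h1, neg_zero])
    (by intro x y hy; exact hmul _ _ (Or.inr hy))
    (by intro x y hy; exact hmul _ _ (Or.inl hy))
  have hI : ∀ x y : MonoidAlgebra (ZMod 2) M, I.ringCon x y ↔ x - y ∈ car := fun x y => Iff.rfl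
  let q : MonoidAlgebra (ZMod 2) M →+* I.ringCon.Quotient := I.ringCon.mk'
  have hq : Function.Surjective q := I.ringCon.mk'_surjective
  have hqe : ∀ x y : MonoidAlgebra (ZMod 2) M, q x = q y ↔ x - y ∈ car := fun x y => by
    rw [← hI]; exact RingCon.eq _
  refine ⟨I.ringCon.Quotient, inferInstance, (q : MonoidAlgebra (ZMod 2) M →* _).comp (MonoidAlgebra.of (ZMod 2) M),
    ?_, ?_, ?_, ?_, ?_⟩
  · let F : I.ringCon.Quotient → ((Jᶜ : Set M) → ZMod 2) :=
      fun a m => (Function.surjInv hq a).coeff m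
    refine Finite.of_injective F ?_
    intro a b hab
    rw [← Function.surjInv_eq hq a, ← Function.surjInv_eq hq b, hqe]
    intro m hm
    have := congrFun hab ⟨m, hm⟩
    change (Function.surjInv hq a).coeff m = (Function.surjInv hq b).coeff m at this
    rw [coeff_sub, Finsupp.sub_apply, this, sub_self]
  · intro j hj
    have : q (MonoidAlgebra.of (ZMod 2) M j) = q 0 := by
      rw [hqe]
      intro m hm
      have : j ≠ m := by rintro rfl; exact hm hj
      simp [MonoidAlgebra.of_apply, MonoidAlgebra.coeff_single, Finsupp.single_apply, this]
    rw [map_zero] at this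
    exact this
  · intro a
    obtain ⟨r, rfl⟩ := hq a
    rw [← map_add, ← map_zero q]
    congr 1
    ext m
    simp only [coeff_add, Finsupp.coe_add, Pi.add_apply, coeff_zero, Finsupp.coe_zero,
      Pi.zero_apply]
    exact CharTwo.add_self_eq_zero _
  · intro p h0 h1 h2 a
    obtain ⟨r, rfl⟩ := hq a
    induction r using MonoidAlgebra.induction_linear with
    | zero => simpa using h0
    | add f g hf hg => rw [map_add]; exact h2 _ _ hf hg
    | single m r =>
      have : r = 0 ∨ r = 1 := by revert r; decide
      rcases this with rfl | rfl
      · simpa using h0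
      · exact h1 m
  · intro C hC
    let τ0 : MonoidAlgebra (ZMod 2) M →+ ZMod 2 := (Finsupp.liftAddHom (fun m : M =>
      if m ∈ C then AddMonoidHom.id (ZMod 2) else 0)).comp coeffAddEquiv.toAddMonoidHom
    have hτ0 : ∀ m r, τ0 (MonoidAlgebra.single m r) = if m ∈ C then r else 0 := by
      intro m r
      simp only [τ0, AddMonoidHom.comp_apply]
      erw [Finsupp.liftAddHom_apply_single]
      split_ifs <;> simp
    have hτ1 : ∀ f : MonoidAlgebra (ZMod 2) M, f ∈ car → τ0 f = 0 := by
      intro f hf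
      change (Finsupp.liftAddHom _) f.coeff = 0
      rw [Finsupp.liftAddHom_apply]
      apply Finset.sum_eq_zero
      intro m hm
      have hmJ : m ∈ J := by
        by_contra h
        exact (Finsupp.mem_support_iff.1 hm) (hf m h)
      have : m ∉ C := fun h => hC m h hmJ
      simp [this]
    have hτ2 : ∀ x y : MonoidAlgebra (ZMod 2) M, q x = q y → τ0 x = τ0 y := by
      intro x y h
      have := hτ1 _ ((hqe x y).1 h)
      rwa [map_sub, sub_eq_zero] at this
    let τ : I.ringCon.Quotient →+ ZMod 2 :=
      { toFun := fun a => τ0 (Function.surjInv hq a)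
        map_zero' := by
          rw [← map_zero τ0]
          exact hτ2 _ _ (by rw [Function.surjInv_eq hq, map_zero])
        map_add' := by
          intro a b
          rw [← map_add τ0]
          exact hτ2 _ _ (by rw [Function.surjInv_eq hq, map_add, Function.surjInv_eq hq,
            Function.surjInv_eq hq]) }
    have hτ : ∀ r, τ (q r) = τ0 r := fun r => hτ2 _ _ (by rw [Function.surjInv_eq hq])
    refine ⟨τ, ?_, ?_⟩
    · intro m hm
      have := hτ (MonoidAlgebra.of (ZMod 2) M m)
      rw [MonoidAlgebra.of_apply, hτ0, if_pos hm] at this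
      exact this
    · intro m hm
      have := hτ (MonoidAlgebra.of (ZMod 2) M m)
      rw [MonoidAlgebra.of_apply, hτ0, if_neg hm] at this
      exact this

end HCS


set_option linter.unusedSectionVars false
set_option linter.unusedSimpArgs false

namespace HCS

/-- The relators of a right-angled Coxeter group. -/
def coxRels {S : Type} (D : SimpleGraph S) : Set (FreeGroup S) :=
  { r | (∃ s, r = FreeGroup.of s * FreeGroup.of s) ∨ ∃ v w : S, D.Adj v w ∧
      r = FreeGroup.of v * FreeGroup.of w * (FreeGroup.of v)⁻¹ * (FreeGroup.of w)⁻¹ }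

/-- The right-angled Coxeter group. -/
abbrev Cox {S : Type} (D : SimpleGraph S) : Type := PresentedGroup (coxRels D)

/-- Coxeter generators. -/
def cs {S : Type} (D : SimpleGraph S) (s : S) : Cox D := PresentedGroup.of s

variable {S : Type} {D : SimpleGraph S}

theorem comm_of_eq_one {G : Type*} [Group G] {a b : G} (h : a * b * a⁻¹ * b⁻¹ = 1) :
    a * b = b * a := by
  have h1 := mul_inv_eq_one.1 h
  exact mul_inv_eq_iff_eq_mul.1 h1

theorem cs_sq (s : S) : cs D s * cs D s = 1 := by
  have : (PresentedGroup.mk (coxRels D) (FreeGroup.of s * FreeGroup.of s)) = 1 :=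
    PresentedGroup.one_of_mem (Or.inl ⟨s, rfl⟩)
  rw [map_mul] at this
  exact this

theorem cs_inv (s : S) : (cs D s)⁻¹ = cs D s := inv_eq_of_mul_eq_one_left (cs_sq s)

theorem cs_comm {s t : S} (h : D.Adj s t) : cs D s * cs D t = cs D t * cs D s := by
  have : (PresentedGroup.mk (coxRels D) (FreeGroup.of s * FreeGroup.of t * (FreeGroup.of s)⁻¹ *
      (FreeGroup.of t)⁻¹)) = 1 :=
    PresentedGroup.one_of_mem (Or.inr ⟨s, t, h, rfl⟩)
  simp only [map_mul, map_inv] at this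
  exact comm_of_eq_one this

/-- The universal property. -/
def coxLift {G : Type*} [Group G] (f : S → G) (h1 : ∀ s, f s * f s = 1)
    (h2 : ∀ s t, D.Adj s t → f s * f t = f t * f s) : Cox D →* G :=
  PresentedGroup.toGroup (f := f) (by
    rintro r (⟨s, rfl⟩ | ⟨s, t, h, rfl⟩)
    · simp [h1]
    · simp [h2 s t h])

theorem coxLift_cs {G : Type*} [Group G] (f : S → G) (h1 : ∀ s, f s * f s = 1)
    (h2 : ∀ s t, D.Adj s t → f s * f t = f t * f s) (s : S) :
    coxLift f h1 h2 (cs D s) = f s := PresentedGroup.toGroup.of _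

theorem cox_induction (p : Cox D → Prop) (h1 : p 1) (hs : ∀ s w, p w → p (cs D s * w)) (w) :
    p w := by
  have hw : w ∈ Subgroup.closure (Set.range (PresentedGroup.of (rels := coxRels D))) := by
    rw [PresentedGroup.closure_range_of]; trivial
  induction hw using Subgroup.closure_induction_left with
  | one => exact h1
  | mul_left x hx y hy ih =>
    obtain ⟨s, rfl⟩ := hx
    exact hs s y ih
  | inv_mul_cancel x hx y hy ih =>
    obtain ⟨s, rfl⟩ := hx
    have := hs s y ih
    rw [← cs_inv] at this
    exact this

theorem cox_word (w : Cox D) : ∃ l : List S, (l.map (cs D)).prod = w := by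
  induction w using cox_induction with
  | h1 => exact ⟨[], rfl⟩
  | hs s w ih =>
    obtain ⟨l, rfl⟩ := ih
    exact ⟨s :: l, by simp⟩

theorem cox_hom_ext {G : Type*} [Group G] {f g : Cox D →* G} (h : ∀ s, f (cs D s) = g (cs D s)) :
    f = g := by
  refine MonoidHom.ext fun x => ?_
  induction x using cox_induction with
  | h1 => simp
  | hs s w ih => rw [map_mul, map_mul, h, ih]

section core

variable (D) in
/-- words of length at most `d`. -/
def ball (d : ℕ) : Set (Cox D) := {w | ∃ l : List S, l.length ≤ d ∧ (l.map (cs D)).prod = w}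

theorem ball_finite [Finite S] (d : ℕ) : (ball D d).Finite := by
  refine ((List.finite_length_le S d).image (fun l => (l.map (cs D)).prod)).subset ?_
  rintro w ⟨l, hl, rfl⟩
  exact ⟨l, hl, rfl⟩

theorem ball_mul {d e : ℕ} {v w : Cox D} (hv : v ∈ ball D d) (hw : w ∈ ball D e) :
    v * w ∈ ball D (d + e) := by
  obtain ⟨l, hl, rfl⟩ := hv
  obtain ⟨m, hm, rfl⟩ := hw
  exact ⟨l ++ m, by simp; omega, by simp⟩

theorem ball_one (d : ℕ) : (1 : Cox D) ∈ ball D d := ⟨[], by simp, rfl⟩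

theorem ball_cs (s : S) : cs D s ∈ ball D 1 := ⟨[s], by simp, by simp⟩

variable (D) in
/-- The monoid of triples. -/
def Mon (Q : Type) : Submonoid (Cox D × Multiplicative ℕ × Function.End (Option Q)) where
  carrier := {a | a.1 ∈ ball D a.2.1.toAdd ∧ a.2.2 none = none}
  one_mem' := ⟨ball_one _, rfl⟩
  mul_mem' := by
    intro a b ha hb
    refine ⟨ball_mul ha.1 hb.1, ?_⟩
    change a.2.2 (b.2.2 none) = none
    rw [hb.2, ha.2]

variable {Q : Type} [Group Q]

/-- The element `e_s`. -/
def eM (π : Cox D →* Q) (s : S) : Mon D Q :=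
  ⟨(1, 1, fun o => o.map (fun q => π (cs D s) * q)), ball_one _, rfl⟩

open Classical in
/-- partial identity -/
noncomputable def pid (P : Set Q) : Function.End (Option Q) :=
  fun o => o.bind (fun q => if q ∈ P then some q else none)

theorem pid_some (P : Set Q) (q : Q) : pid P (some q) = open Classical in if q ∈ P then some q else none := rfl

theorem pid_none (P : Set Q) : pid P none = none := rfl

/-- The element `f_s`. -/
noncomputable def fM (P : S → Subgroup Q) (s : S) : Mon D Q :=
  ⟨(cs D s, Multiplicative.ofAdd 1, pid (P s : Set Q)), ball_cs s, rfl⟩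

/-- degree -/
def deg (a : Mon D Q) : ℕ := a.1.2.1.toAdd

theorem deg_mul (a b : Mon D Q) : deg (a * b) = deg a + deg b := rfl

theorem Mon_ext {a b : Mon D Q} (h1 : a.1.1 = b.1.1) (h2 : deg a = deg b)
    (h3 : ∀ q, a.1.2.2 (some q) = b.1.2.2 (some q)) : a = b := by
  apply Subtype.ext
  refine Prod.ext h1 (Prod.ext h2 ?_)
  funext o
  cases o with
  | none => exact a.2.2.trans b.2.2.symm
  | some q => exact h3 q

theorem mul_act (a b : Mon D Q) (o) : (a * b).1.2.2 o = a.1.2.2 (b.1.2.2 o) := rfl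
theorem mul_fst (a b : Mon D Q) : (a * b).1.1 = a.1.1 * b.1.1 := rfl
theorem one_act (o) : (1 : Mon D Q).1.2.2 o = o := rfl
theorem eM_act (π : Cox D →* Q) (s : S) (o) : (eM π s).1.2.2 o = o.map (fun q => π (cs D s) * q) := rfl
theorem fM_act (P : S → Subgroup Q) (s : S) (o) : (fM (D := D) P s).1.2.2 o = pid (P s : Set Q) o := rfl

/-- The ideal. -/
def JM (n : ℕ) : Set (Mon D Q) := {a | n < deg a ∨ ∃ d < deg a, a.1.1 ∈ ball D d}

theorem JM_left {n : ℕ} (a b : Mon D Q) (h : b ∈ JM n) : a * b ∈ JM n := by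
  rcases h with h | ⟨d, hd, h⟩
  · left; rw [deg_mul]; omega
  · right
    exact ⟨deg a + d, by rw [deg_mul]; omega, ball_mul a.2.1 h⟩

theorem JM_right {n : ℕ} (a b : Mon D Q) (h : a ∈ JM n) : a * b ∈ JM n := by
  rcases h with h | ⟨d, hd, h⟩
  · left; rw [deg_mul]; omega
  · right
    exact ⟨d + deg b, by rw [deg_mul]; omega, ball_mul h b.2.1⟩

theorem JM_fin [Finite S] [Finite Q] (n : ℕ) : Finite ((JM n : Set (Mon D Q))ᶜ : Set (Mon D Q)) := by
  have hE : Finite (Function.End (Option Q)) := inferInstanceAs (Finite (Option Q → Option Q))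
  have h1 := ball_finite (D := D) n
  have h2 : ({k : Multiplicative ℕ | k.toAdd ≤ n}).Finite := Set.finite_le_nat n
  have h3 : (Set.univ : Set (Function.End (Option Q))).Finite := Set.finite_univ
  have h4 := (h1.prod (h2.prod h3)).preimage
    (f := (Subtype.val : Mon D Q → _)) Subtype.val_injective.injOn
  refine (h4.subset ?_).to_subtype
  intro a ha
  have hd : deg a ≤ n := by
    by_contra h
    exact ha (Or.inl (by omega))
  refine ⟨?_, hd, trivial⟩
  obtain ⟨l, hl, h⟩ := a.2.1
  exact ⟨l, hl.trans hd, h⟩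

/-- cyclic sets -/
def CM (π : Cox D →* Q) (x : Cox D) (n : ℕ) (κ : Q) : Set (Mon D Q) :=
  {a | deg a = n ∧ ∃ k : Cox D, k * a.1.1 * k⁻¹ = x ∧ a.1.2.2 (some (κ * π k)) = some (κ * π k)}

theorem CM_e (π : Cox D →* Q) (x : Cox D) (n : ℕ) (κ : Q) (s : S) (a : Mon D Q) :
    eM π s * a ∈ CM π x n κ ↔ a * eM π s ∈ CM π x n (π (cs D s) * κ) := by
  have hs : π (cs D s) * π (cs D s) = 1 := by rw [← map_mul, cs_sq, map_one]
  have hd1 : deg (eM π s * a) = deg a := by rw [deg_mul]; exact Nat.zero_add _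
  have hd2 : deg (a * eM π s) = deg a := by rw [deg_mul]; exact Nat.add_zero _
  have hw1 : (eM π s * a).1.1 = a.1.1 := by rw [mul_fst]; exact one_mul _
  have hw2 : (a * eM π s).1.1 = a.1.1 := by rw [mul_fst]; exact mul_one _
  simp only [CM, Set.mem_ofPred_eq, hd1, hd2, hw1, hw2, mul_act, eM_act, Option.map_some]
  refine and_congr_right fun _ => exists_congr fun k => and_congr_right fun _ => ?_
  have e1 : π (cs D s) * (π (cs D s) * κ * π k) = κ * π k := by
    rw [mul_assoc, ← mul_assoc, hs, one_mul]
  rw [e1]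
  constructor
  · intro h
    obtain ⟨q, hq, h⟩ := Option.map_eq_some_iff.1 h
    rw [hq, mul_assoc, ← h, ← mul_assoc, hs, one_mul]
  · intro h
    rw [h, Option.map_some, e1]

theorem CM_f (π : Cox D →* Q) (P : S → Subgroup Q)
    (hP3 : ∀ s, ∀ q ∈ P s, π (cs D s) * q = q * π (cs D s))
    (x : Cox D) (n : ℕ) (κ : Q) (s : S) (a : Mon D Q) :
    fM P s * a ∈ CM π x n κ ↔ a * fM P s ∈ CM π x n (π (cs D s) * κ) := by
  have hs : π (cs D s) * π (cs D s) = 1 := by rw [← map_mul, cs_sq, map_one]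
  have hd1 : deg (fM P s * a) = 1 + deg a := by rw [deg_mul]; rfl
  have hd2 : deg (a * fM P s) = 1 + deg a := by rw [deg_mul]; exact Nat.add_comm _ _
  have hw1 : (fM P s * a).1.1 = cs D s * a.1.1 := rfl
  have hw2 : (a * fM P s).1.1 = a.1.1 * cs D s := rfl
  simp only [CM, Set.mem_ofPred_eq, hd1, hd2, hw1, hw2, mul_act, fM_act]
  refine and_congr_right fun _ => ?_
  constructor
  · rintro ⟨k, hk, h⟩
    refine ⟨k * cs D s, ?_, ?_⟩
    · rw [← hk, mul_inv_rev, cs_inv]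
      have := cs_sq (D := D) s
      calc _ = k * cs D s * a.1.1 * (cs D s * cs D s) * k⁻¹ := by group
        _ = _ := by rw [this]; group
    · cases ho : a.1.2.2 (some (κ * π k)) with
      | none => rw [ho] at h; simp [pid_none] at h
      | some q =>
        rw [ho, pid_some] at h
        split_ifs at h with hq
        have hq2 : q = κ * π k := by simpa using h
        have e : π (cs D s) * κ * π (k * cs D s) = κ * π k := by
          have := hP3 s q hq
          rw [hq2] at this
          rw [map_mul, mul_assoc, ← mul_assoc κ, ← this, ← mul_assoc, hs, one_mul]
        rw [e, pid_some, if_pos (hq2 ▸ hq), ho, hq2]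
  · rintro ⟨k, hk, h⟩
    refine ⟨k * cs D s, ?_, ?_⟩
    · rw [← hk, mul_inv_rev, cs_inv]
      have := cs_sq (D := D) s
      calc _ = k * (cs D s * cs D s) * a.1.1 * cs D s * k⁻¹ := by group
        _ = _ := by rw [this]; group
    · rw [pid_some] at h
      split_ifs at h with hq
      · have e : κ * π (k * cs D s) = π (cs D s) * κ * π k := by
          have := hP3 s _ hq
          have h2 : π (cs D s) * (π (cs D s) * κ * π k) = κ * π k := by
            rw [mul_assoc, ← mul_assoc, hs, one_mul]
          rw [h2] at this
          have h3 : κ * π k * π (cs D s) =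
            π (cs D s) * κ * π k * (π (cs D s) * π (cs D s)) := by
            rw [this]; group
          rw [map_mul, ← mul_assoc, this, mul_assoc, hs, mul_one]
        rw [e, h, pid_some, if_pos hq]
      · rw [a.2.2] at h
        simp at h

end core
end HCS


namespace HCS

theorem fM_prod_act {S : Type} {D : SimpleGraph S} {Q : Type} [Group Q] (P : S → Subgroup Q)
    (q : Q) (l : List S) :
    ((∀ s ∈ l, q ∈ P s) ∧ ((l.map (fM (D := D) P)).prod).1.2.2 (some q) = some q) ∨
    ((¬ ∀ s ∈ l, q ∈ P s) ∧ ((l.map (fM (D := D) P)).prod).1.2.2 (some q) = none) := by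
  induction l with
  | nil => left; exact ⟨by simp, rfl⟩
  | cons s l ih =>
    rw [List.map_cons, List.prod_cons, mul_act]
    rcases ih with ⟨h1, h2⟩ | ⟨h1, h2⟩
    · rw [h2, fM_act, pid_some]
      by_cases hq : q ∈ P s
      · left
        refine ⟨by simpa using ⟨hq, h1⟩, if_pos hq⟩
      · right
        refine ⟨fun h => hq (h s (by simp)), if_neg hq⟩
    · right
      rw [h2]
      exact ⟨fun h => h1 fun t ht => h t (by simp [ht]), rfl⟩

theorem fM_prod_fst {S : Type} {D : SimpleGraph S} {Q : Type} [Group Q] (P : S → Subgroup Q)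
    (l : List S) :
    ((l.map (fM (D := D) P)).prod).1.1 = (l.map (cs D)).prod := by
  induction l with
  | nil => rfl
  | cons s l ih => rw [List.map_cons, List.prod_cons, mul_fst, ih]; rfl

theorem fM_prod_deg {S : Type} {D : SimpleGraph S} {Q : Type} [Group Q] (P : S → Subgroup Q)
    (l : List S) :
    deg ((l.map (fM (D := D) P)).prod) = l.length := by
  induction l with
  | nil => rfl
  | cons s l ih =>
    rw [List.map_cons, List.prod_cons, deg_mul, ih, List.length_cons, Nat.add_comm]; rfl

theorem core {S : Type} [Finite S] (D : SimpleGraph S) {Q : Type} [Group Q] [Finite Q]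
    (π : Cox D →* Q) (P : S → Subgroup Q)
    (hP1 : ∀ s, π (cs D s) ∈ P s) (hP2 : ∀ s t, D.Adj s t → π (cs D s) ∈ P t)
    (hP3 : ∀ s, ∀ q ∈ P s, π (cs D s) * q = q * π (cs D s))
    (lx l : List S)
    (hmin : ∀ (k : Cox D) (m : List S),
      k * (m.map (cs D)).prod * k⁻¹ = (lx.map (cs D)).prod → lx.length ≤ m.length)
    (hl : l.length ≤ lx.length) :
    ∃ L : Subgroup (Cox D), L.Normal ∧ L.FiniteIndex ∧ ∀ g : Cox D,
      (g * (l.map (cs D)).prod * g⁻¹) * ((lx.map (cs D)).prod)⁻¹ ∈ L →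
      ∃ k, k * (l.map (cs D)).prod * k⁻¹ = (lx.map (cs D)).prod ∧
        ∀ s ∈ l, (π g)⁻¹ * π k ∈ P s := by
  classical
  set n := lx.length with hn
  set x := (lx.map (cs D)).prod with hx
  obtain ⟨A, _, ι, hA, hJ, h2, hind, hτ⟩ := rees_exists (JM n : Set (Mon D Q)) JM_left JM_right
    (JM_fin n)
  have hC : ∀ κ : Q, ∀ m ∈ CM π x n κ, m ∉ (JM n : Set (Mon D Q)) := by
    rintro κ m ⟨hd, k, hk, -⟩ (h | ⟨d, hd', l', hl', h⟩)
    · omega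
    · have := hmin k l' (by rw [h, hk])
      omega
  choose τ hτ1 hτ0 using fun κ => hτ (CM π x n κ) (hC κ)
  have hsπ : ∀ s, π (cs D s) * π (cs D s) = 1 := fun s => by rw [← map_mul, cs_sq, map_one]
  -- the images of the generators
  let φs : S → A := fun s => ι (eM π s) + ι (fM P s)
  have hmemcom : ∀ s t, (s = t ∨ D.Adj s t) → ∀ q, π (cs D s) * q ∈ (P t : Set Q) ↔
      q ∈ (P t : Set Q) := by
    intro s t h q
    have : π (cs D s) ∈ P t := by
      rcases h with rfl | h
      · exact hP1 s
      · exact hP2 s t h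
    exact Subgroup.mul_mem_cancel_left _ this
  have hef : ∀ s t, (s = t ∨ D.Adj s t) → eM π s * fM P t = fM P t * eM π s := by
    intro s t h
    refine Mon_ext ?_ ?_ ?_
    · rw [mul_fst, mul_fst]
      exact (one_mul _).trans (mul_one _).symm
    · rw [deg_mul, deg_mul, Nat.add_comm]
    · intro q
      rw [mul_act, mul_act, fM_act, fM_act, eM_act, eM_act, Option.map_some, pid_some, pid_some]
      by_cases hq : q ∈ (P t : Set Q)
      · rw [if_pos hq, if_pos ((hmemcom s t h q).2 hq)]; rfl
      · rw [if_neg hq, if_neg (fun hh => hq ((hmemcom s t h q).1 hh))]; rfl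
  have hee : ∀ s, eM π s * eM π s = 1 := by
    intro s
    refine Mon_ext ?_ ?_ ?_
    · exact one_mul _
    · rfl
    · intro q
      rw [mul_act, eM_act, eM_act, Option.map_some, Option.map_some, one_act, ← mul_assoc, hsπ,
        one_mul]
  have hee2 : ∀ s t, D.Adj s t → eM π s * eM π t = eM π t * eM π s := by
    intro s t h
    refine Mon_ext rfl rfl ?_
    intro q
    simp only [mul_act, eM_act, Option.map_some, ← mul_assoc]
    rw [← map_mul, cs_comm h, map_mul]
  have hff : ∀ s, fM P s * fM P s ∈ (JM n : Set (Mon D Q)) := by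
    intro s
    right
    refine ⟨0, ?_, ?_⟩
    · rw [deg_mul]; exact Nat.zero_lt_two
    · rw [mul_fst]
      change cs D s * cs D s ∈ _
      rw [cs_sq]; exact ball_one _
  have hff2 : ∀ s t, D.Adj s t → fM (D := D) P s * fM P t = fM P t * fM P s := by
    intro s t h
    refine Mon_ext (cs_comm h) rfl ?_
    intro q
    rw [mul_act, mul_act]
    simp only [fM_act, pid_some]
    by_cases h1 : q ∈ P s <;> by_cases h2 : q ∈ P t <;>
      simp [h1, h2, pid_some, pid_none]
  have hφsq : ∀ s, φs s * φs s = 1 := by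
    intro s
    simp only [φs, add_mul, mul_add, ← map_mul]
    rw [hee, hef s s (Or.inl rfl), hJ _ (hff s), add_zero, map_one, add_assoc, h2, add_zero]
  have hφc : ∀ s t, D.Adj s t → φs s * φs t = φs t * φs s := by
    intro s t h
    simp only [φs, add_mul, mul_add, ← map_mul]
    rw [hee2 s t h, hff2 s t h, hef s t (Or.inr h), hef t s (Or.inr h.symm)]
    abel
  let φ : Cox D →* Aˣ := coxLift (fun s => ⟨φs s, φs s, hφsq s, hφsq s⟩)
    (fun s => Units.ext (hφsq s)) (fun s t h => Units.ext (hφc s t h))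
  have hφ : ∀ s, ((φ (cs D s) : Aˣ) : A) = φs s := by
    intro s
    simp only [φ]
    rw [coxLift_cs]
  -- the twisted trace property
  have htr1 : ∀ s κ a, τ κ (φs s * a) = τ (π (cs D s) * κ) (a * φs s) := by
    intro s κ a
    refine hind (fun a => τ κ (φs s * a) = τ (π (cs D s) * κ) (a * φs s)) ?_ ?_ ?_ a
    · simp
    · intro m
      have key : ∀ b : Mon D Q, (b * m ∈ CM π x n κ ↔ m * b ∈ CM π x n (π (cs D s) * κ)) →
          τ κ (ι (b * m)) = τ (π (cs D s) * κ) (ι (m * b)) := by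
        intro b hb
        by_cases h : b * m ∈ CM π x n κ
        · rw [hτ1 _ _ h, hτ1 _ _ (hb.1 h)]
        · rw [hτ0 _ _ h, hτ0 _ _ (fun hh => h (hb.2 hh))]
      simp only [φs, add_mul, mul_add, ← map_mul]
      rw [map_add, map_add, key _ (CM_e π x n κ s m), key _ (CM_f π P hP3 x n κ s m)]
    · intro a b ha hb
      simp only [mul_add, add_mul, map_add] at ha hb ⊢
      rw [ha, hb]
  have htr : ∀ (g : Cox D) (κ : Q) (a : A),
      τ κ ((φ g : A) * a) = τ ((π g)⁻¹ * κ) (a * (φ g : A)) := by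
    intro g
    induction g using cox_induction with
    | h1 => intro κ a; simp
    | hs s w ih =>
      intro κ a
      rw [map_mul φ, Units.val_mul, hφ, mul_assoc, htr1, mul_assoc, ih, map_mul π, mul_inv_rev,
        ← map_inv π (cs D s), cs_inv, mul_assoc, mul_assoc]
  -- expansion of a product
  have hexp : ∀ m : List S, ∃ r ∈ AddSubmonoid.closure {a | ∃ b, deg b < m.length ∧ a = ι b},
      ((φ ((m.map (cs D)).prod) : Aˣ) : A) = ι ((m.map (fM P)).prod) + r := by
    intro m
    induction m with
    | nil => exact ⟨0, zero_mem _, by simp⟩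
    | cons s m ih =>
      obtain ⟨r, hr, h⟩ := ih
      refine ⟨ι (eM π s * (m.map (fM P)).prod) + φs s * r, ?_, ?_⟩
      · refine add_mem (AddSubmonoid.subset_closure ⟨_, ?_, rfl⟩) ?_
        · rw [deg_mul, fM_prod_deg, List.length_cons]
          change 0 + _ < _
          omega
        · clear h
          induction hr using AddSubmonoid.closure_induction with
          | mem z hz =>
            obtain ⟨b, hb, rfl⟩ := hz
            simp only [φs, add_mul, ← map_mul]
            refine add_mem (AddSubmonoid.subset_closure ⟨_, ?_, rfl⟩)
              (AddSubmonoid.subset_closure ⟨_, ?_, rfl⟩)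
            · rw [deg_mul, List.length_cons]
              change 0 + _ < _
              omega
            · rw [deg_mul, List.length_cons]
              change 1 + _ < _
              omega
          | zero => rw [mul_zero]; exact zero_mem _
          | add y z _ _ hy hz => rw [mul_add]; exact add_mem hy hz
      · rw [List.map_cons, List.prod_cons, map_mul, Units.val_mul, hφ, h, List.map_cons,
          List.prod_cons, mul_add, map_mul, map_mul]
        simp only [φs, add_mul]
        abel
  have hτexp : ∀ (κ : Q) (m : List S), m.length ≤ n →
      τ κ ((φ ((m.map (cs D)).prod) : Aˣ) : A) = τ κ (ι ((m.map (fM P)).prod)) := by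
    intro κ m hm
    obtain ⟨r, hr, h⟩ := hexp m
    have : τ κ r = 0 := by
      clear h
      induction hr using AddSubmonoid.closure_induction with
      | mem z hz =>
        obtain ⟨b, hb, rfl⟩ := hz
        refine hτ0 κ b ?_
        rintro ⟨h, -⟩
        omega
      | zero => simp
      | add y z _ _ hy hz => rw [map_add, hy, hz, add_zero]
    rw [h, map_add, this, add_zero]
  refine ⟨φ.ker, inferInstance, inferInstance, ?_⟩
  intro g hg
  set y := (l.map (cs D)).prod with hy
  have hg2 : φ x = φ g * φ y * (φ g)⁻¹ := by
    rw [MonoidHom.mem_ker, map_mul, map_inv, mul_inv_eq_one, map_mul, map_mul, map_inv] at hg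
    exact hg.symm
  have hx1 : τ 1 ((φ x : Aˣ) : A) = 1 := by
    rw [hx, hτexp 1 lx le_rfl]
    refine hτ1 1 _ ⟨fM_prod_deg P lx, 1, ?_, ?_⟩
    · rw [fM_prod_fst, ← hx]; group
    · rcases fM_prod_act (D := D) P (1 * π 1) lx with ⟨-, h⟩ | ⟨h, -⟩
      · exact h
      · exact absurd (fun s _ => by rw [map_one, one_mul]; exact one_mem _) h
  have hy1 : τ (π g)⁻¹ ((φ y : Aˣ) : A) = 1 := by
    rw [hg2, mul_assoc, Units.val_mul, htr, ← Units.val_mul, mul_assoc, inv_mul_cancel, mul_one,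
      mul_one] at hx1
    exact hx1
  rw [hy, hτexp _ l hl] at hy1
  have hmem : (l.map (fM P)).prod ∈ CM π x n (π g)⁻¹ := by
    by_contra h
    rw [hτ0 _ _ h] at hy1
    exact zero_ne_one hy1
  obtain ⟨-, k, hk, hfix⟩ := hmem
  refine ⟨k, by rw [← hk, fM_prod_fst], ?_⟩
  rcases fM_prod_act (D := D) P ((π g)⁻¹ * π k) l with ⟨h, -⟩ | ⟨-, h⟩
  · exact h
  · rw [h] at hfix; simp at hfix

end HCS


namespace HCS

theorem finiteIndex_comap {G G' : Type*} [Group G] [Group G'] (f : G →* G') (H : Subgroup G')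
    (h : H.FiniteIndex) : (H.comap f).FiniteIndex := by
  constructor
  rw [Subgroup.index_comap]
  exact (Subgroup.instFiniteIndex_subgroupOf H f.range).index_ne_zero

section

variable {S : Type} {D : SimpleGraph S}

open Classical in
variable (D) in
/-- retraction onto a special subgroup -/
noncomputable def ret (U : Set S) : Cox D →* Cox D :=
  coxLift (fun s => if s ∈ U then cs D s else 1)
    (by intro s; split_ifs; exacts [cs_sq s, one_mul 1])
    (by intro s t h; split_ifs <;> simp [cs_comm h])

theorem ret_pos {U : Set S} {s : S} (h : s ∈ U) : ret D U (cs D s) = cs D s := by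
  rw [ret, coxLift_cs, if_pos h]

theorem ret_neg {U : Set S} {s : S} (h : s ∉ U) : ret D U (cs D s) = 1 := by
  rw [ret, coxLift_cs, if_neg h]

theorem ret_ret (U T : Set S) (w : Cox D) : ret D U (ret D T w) = ret D (U ∩ T) w := by
  have : (ret D U).comp (ret D T) = ret D (U ∩ T) := by
    apply cox_hom_ext
    intro s
    rw [MonoidHom.comp_apply]
    by_cases hT : s ∈ T
    · rw [ret_pos hT]
      by_cases hU : s ∈ U
      · rw [ret_pos hU, ret_pos (Set.mem_inter hU hT)]
      · rw [ret_neg hU, ret_neg (fun h => hU h.1)]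
    · rw [ret_neg hT, ret_neg (fun h => hT h.2), map_one]
  rw [← this]; rfl

theorem ret_univ (w : Cox D) : ret D Set.univ w = w := by
  have : ret D Set.univ = MonoidHom.id _ := cox_hom_ext fun s => ret_pos trivial
  rw [this]; rfl

variable (D) in
/-- the star of a vertex -/
def star (s : S) : Set S := {r | r = s ∨ D.Adj s r}

theorem ret_comm {U : Set S} {s : S} (h : U ⊆ star D s) (w : Cox D) :
    cs D s * ret D U w = ret D U w * cs D s := by
  induction w using cox_induction with
  | h1 => simp
  | hs r w ih =>
    rw [map_mul]
    by_cases hr : r ∈ U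
    · rw [ret_pos hr]
      have : cs D s * cs D r = cs D r * cs D s := by
        rcases h hr with rfl | h
        · rfl
        · exact cs_comm h
      rw [← mul_assoc, this, mul_assoc, ih, mul_assoc]
    · rw [ret_neg hr, one_mul, ih]

theorem cox_main_aux [Finite S] (H : Subgroup (Cox D)) (hHn : H.Normal) (hHf : H.FiniteIndex)
    (lx l : List S)
    (hmin : ∀ (k : Cox D) (m : List S),
      k * (m.map (cs D)).prod * k⁻¹ = (lx.map (cs D)).prod → lx.length ≤ m.length)
    (hl : l.length ≤ lx.length) :
    ∃ L : Subgroup (Cox D), L.Normal ∧ L.FiniteIndex ∧ ∀ g : Cox D,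
      (g * (l.map (cs D)).prod * g⁻¹) * ((lx.map (cs D)).prod)⁻¹ ∈ L →
      ∃ k, k * (l.map (cs D)).prod * k⁻¹ = (lx.map (cs D)).prod ∧ g⁻¹ * k ∈ H := by
  classical
  let L0 : Subgroup (Cox D) := ⨅ U : Set S, H.comap (ret D U)
  have hL0n : L0.Normal := Subgroup.normal_iInf_normal fun U => inferInstance
  have hL0f : L0.FiniteIndex := Subgroup.finiteIndex_iInf fun U => finiteIndex_comap _ _ hHf
  have hmem : ∀ w, w ∈ L0 ↔ ∀ U, ret D U w ∈ H := fun w => by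
    simp only [L0, Subgroup.mem_iInf, Subgroup.mem_comap]
  have hL0H : ∀ w ∈ L0, w ∈ H := fun w hw => by
    have := (hmem w).1 hw Set.univ
    rwa [ret_univ] at this
  have hinv : ∀ T, ∀ w ∈ L0, ret D T w ∈ L0 := fun T w hw => (hmem _).2 fun U => by
    rw [ret_ret]; exact (hmem w).1 hw _
  let π : Cox D →* Cox D ⧸ L0 := QuotientGroup.mk' L0
  have hπ : ∀ a b, π a = π b ↔ a⁻¹ * b ∈ L0 := fun a b => QuotientGroup.eq
  have hπr : ∀ T a b, π a = π b → π (ret D T a) = π (ret D T b) := by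
    intro T a b h
    rw [hπ] at h ⊢
    rw [← map_inv, ← map_mul]
    exact hinv T _ h
  let P : S → Subgroup (Cox D ⧸ L0) := fun s => ((ret D (star D s)).range).map π
  obtain ⟨L, hLn, hLf, hL⟩ := core D π P
    (by
      intro s
      exact ⟨cs D s, ⟨cs D s, ret_pos (Or.inl rfl)⟩, rfl⟩)
    (by
      intro s t h
      exact ⟨cs D s, ⟨cs D s, ret_pos (Or.inr h.symm)⟩, rfl⟩)
    (by
      rintro s q ⟨_, ⟨w, rfl⟩, rfl⟩
      rw [← map_mul, ret_comm le_rfl, map_mul])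
    lx l hmin hl
  refine ⟨L, hLn, hLf, fun g hg => ?_⟩
  obtain ⟨k, hk, hP⟩ := hL g hg
  set u := g⁻¹ * k with hu
  have hP' : ∀ s ∈ l, π (ret D (star D s) u) = π u := by
    intro s hs
    obtain ⟨_, ⟨w, rfl⟩, hw⟩ := hP s hs
    have hw' : π (ret D (star D s) w) = π u := by rw [hw, hu, map_mul, map_inv]
    have := hπr (star D s) _ _ hw'
    rw [ret_ret, Set.inter_self, hw'] at this
    exact this.symm
  let T : List S → Set S := fun m => {r | ∀ s ∈ m, r ∈ star D s}
  have hT : ∀ m : List S, (∀ s ∈ m, s ∈ l) → π (ret D (T m) u) = π u := by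
    intro m
    induction m with
    | nil =>
      intro _
      have : T [] = Set.univ := by ext r; simp [T]
      rw [this, ret_univ]
    | cons s m ih =>
      intro h
      have e : T (s :: m) = star D s ∩ T m := by ext r; simp [T]
      rw [e, ← ret_ret, hπr _ _ _ (ih fun t ht => h t (by simp [ht])), hP' s (h s (by simp))]
  have h1 := hT l (fun s h => h)
  set c := ret D (T l) u with hc
  have hcomm : ∀ m : List S, (∀ s ∈ m, s ∈ l) →
      c * (m.map (cs D)).prod = (m.map (cs D)).prod * c := by
    intro m
    induction m with
    | nil => intro _; simp
    | cons s m ih =>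
      intro h
      have h3 : cs D s * c = c * cs D s := ret_comm (U := T l) (fun r hr => hr s (h s (by simp))) u
      rw [List.map_cons, List.prod_cons, ← mul_assoc, ← h3, mul_assoc,
        ih fun t ht => h t (by simp [ht]), mul_assoc]
  refine ⟨k * c⁻¹, ?_, ?_⟩
  · rw [← hk, mul_inv_rev, inv_inv]
    have := hcomm l (fun s h => h)
    calc _ = k * c⁻¹ * ((l.map (cs D)).prod * c) * k⁻¹ := by group
      _ = _ := by rw [← this]; group
  · apply hL0H
    rw [← mul_assoc, ← hu]
    have := (hπ _ _).1 h1
    have h3 := hL0n.conj_mem _ (L0.inv_mem this) c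
    have e : c * (c⁻¹ * u)⁻¹ * c⁻¹ = (u * c⁻¹)⁻¹ := by group
    rw [e] at h3
    simpa using L0.inv_mem h3

theorem exists_min_word (x : Cox D) : ∃ (a : Cox D) (lx : List S),
    a * x * a⁻¹ = (lx.map (cs D)).prod ∧ ∀ (k : Cox D) (m : List S),
      k * (m.map (cs D)).prod * k⁻¹ = (lx.map (cs D)).prod → lx.length ≤ m.length := by
  classical
  have hex : ∃ n : ℕ, ∃ (a : Cox D) (lx : List S), a * x * a⁻¹ = (lx.map (cs D)).prod ∧
      lx.length = n := by
    obtain ⟨l, hl⟩ := cox_word x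
    exact ⟨_, 1, l, by rw [hl]; group, rfl⟩
  obtain ⟨a, lx, h1, h2⟩ := Nat.find_spec hex
  refine ⟨a, lx, h1, fun k m hm => ?_⟩
  rw [h2]
  refine Nat.find_min' hex ⟨k⁻¹ * a, m, ?_, rfl⟩
  have : (m.map (cs D)).prod = k⁻¹ * (a * x * a⁻¹) * k := by rw [h1, ← hm]; group
  rw [this]; group

theorem cox_main [Finite S] (H : Subgroup (Cox D)) (hHn : H.Normal) (hHf : H.FiniteIndex)
    (x y : Cox D) :
    ∃ L : Subgroup (Cox D), L.Normal ∧ L.FiniteIndex ∧ ∀ g : Cox D,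
      (g * y * g⁻¹) * x⁻¹ ∈ L → ∃ k, k * y * k⁻¹ = x ∧ g⁻¹ * k ∈ H := by
  obtain ⟨a, lx, hx, hxm⟩ := exists_min_word x
  obtain ⟨b, ly, hy, hym⟩ := exists_min_word y
  have hx' : x = a⁻¹ * (lx.map (cs D)).prod * a := by rw [← hx]; group
  have hy' : y = b⁻¹ * (ly.map (cs D)).prod * b := by rw [← hy]; group
  rcases le_total ly.length lx.length with h | h
  · obtain ⟨L, hLn, hLf, hL⟩ := cox_main_aux H hHn hHf lx ly hxm h
    refine ⟨L, hLn, hLf, fun g hg => ?_⟩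
    obtain ⟨k, hk, hkH⟩ := hL (a * g * b⁻¹) (by
      have := hLn.conj_mem _ hg a
      rw [← hx, ← hy]
      convert this using 1
      group)
    refine ⟨a⁻¹ * k * b, ?_, ?_⟩
    · rw [hx', ← hk, hy']; group
    · have := hHn.conj_mem _ hkH b⁻¹
      convert this using 1
      group
  · obtain ⟨L, hLn, hLf, hL⟩ := cox_main_aux H hHn hHf ly lx hym h
    refine ⟨L, hLn, hLf, fun g hg => ?_⟩
    obtain ⟨k, hk, hkH⟩ := hL (b * g⁻¹ * a⁻¹) (by
      have := hLn.conj_mem _ (L.inv_mem hg) (b * g⁻¹)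
      rw [← hx, ← hy]
      convert this using 1
      group)
    refine ⟨a⁻¹ * k⁻¹ * b, ?_, ?_⟩
    · rw [hx', hy', ← hk]; group
    · have h4 := hHn.conj_mem _ (H.inv_mem hkH) (b⁻¹ * (b * g⁻¹ * a⁻¹))
      convert h4 using 1
      group

end

end HCS


namespace HCS

section raag

variable {V : Type} {Γ : SimpleGraph V}

variable (Γ) in
/-- generators of the RAAG -/
def rg (v : V) : RAAG Γ := PresentedGroup.of v

theorem rg_comm {s t : V} (h : Γ.Adj s t) : rg Γ s * rg Γ t = rg Γ t * rg Γ s := by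
  have : (PresentedGroup.mk (raagRels Γ) (FreeGroup.of s * FreeGroup.of t * (FreeGroup.of s)⁻¹ *
      (FreeGroup.of t)⁻¹)) = 1 :=
    PresentedGroup.one_of_mem ⟨s, t, h, rfl⟩
  simp only [map_mul, map_inv] at this
  exact comm_of_eq_one this

/-- The universal property. -/
def raagLift {G : Type*} [Group G] (f : V → G)
    (h2 : ∀ s t, Γ.Adj s t → f s * f t = f t * f s) : RAAG Γ →* G :=
  PresentedGroup.toGroup (f := f) (by
    rintro r ⟨s, t, h, rfl⟩
    simp [h2 s t h])

theorem raagLift_rg {G : Type*} [Group G] (f : V → G)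
    (h2 : ∀ s t, Γ.Adj s t → f s * f t = f t * f s) (s : V) :
    raagLift f h2 (rg Γ s) = f s := PresentedGroup.toGroup.of _

theorem raag_closure : Subgroup.closure (Set.range (rg Γ)) = ⊤ :=
  PresentedGroup.closure_range_of _

theorem raag_induction (p : RAAG Γ → Prop) (h1 : p 1) (hs : ∀ s w, p w → p (rg Γ s * w))
    (hs' : ∀ s w, p w → p ((rg Γ s)⁻¹ * w)) (w) : p w := by
  have hw : w ∈ Subgroup.closure (Set.range (rg Γ)) := by
    rw [raag_closure]; trivial
  induction hw using Subgroup.closure_induction_left with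
  | one => exact h1
  | mul_left x hx y hy ih =>
    obtain ⟨s, rfl⟩ := hx
    exact hs s y ih
  | inv_mul_cancel x hx y hy ih =>
    obtain ⟨s, rfl⟩ := hx
    exact hs' s y ih

theorem raag_hom_ext {G : Type*} [Group G] {f g : RAAG Γ →* G}
    (h : ∀ s, f (rg Γ s) = g (rg Γ s)) : f = g := by
  refine MonoidHom.ext fun x => ?_
  induction x using raag_induction with
  | h1 => simp
  | hs s w ih => rw [map_mul, map_mul, h, ih]
  | hs' s w ih => rw [map_mul, map_mul, map_inv, map_inv, h, ih]

variable (Γ) in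
/-- The Coxeter graph. -/
def dbl : SimpleGraph (V × Bool) where
  Adj a b := a.1 ≠ b.1 ∧ (a.2 = true → b.2 = true → Γ.Adj a.1 b.1)
  symm := ⟨fun a b h => ⟨h.1.symm, fun h1 h2 => (h.2 h2 h1).symm⟩⟩
  loopless := ⟨fun a h => h.1 rfl⟩

theorem dbl_adj {a b : V × Bool} :
    (dbl Γ).Adj a b ↔ a.1 ≠ b.1 ∧ (a.2 = true → b.2 = true → Γ.Adj a.1 b.1) := Iff.rfl

variable (Γ) in
/-- embedding of the RAAG in the Coxeter group -/
def emb : RAAG Γ →* Cox (dbl Γ) :=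
  raagLift (fun v => cs (dbl Γ) (v, true) * cs (dbl Γ) (v, false)) (by
    intro s t h
    have hc : ∀ i j, Commute (cs (dbl Γ) (s, i)) (cs (dbl Γ) (t, j)) := fun i j =>
      cs_comm (dbl_adj.2 ⟨h.ne, fun _ _ => h⟩)
    exact ((hc _ _).mul_right (hc _ _)).mul_left ((hc _ _).mul_right (hc _ _)))

theorem emb_rg (v : V) : emb Γ (rg Γ v) = cs (dbl Γ) (v, true) * cs (dbl Γ) (v, false) :=
  raagLift_rg _ _ v

open Classical in
variable (Γ) in
/-- inversion of one generator -/
noncomputable def flipHom (v : V) : RAAG Γ →* RAAG Γ :=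
  raagLift (fun u => if u = v then (rg Γ u)⁻¹ else rg Γ u) (by
    intro s t h
    have hc : Commute (rg Γ s) (rg Γ t) := rg_comm h
    have h1 := hc.inv_left
    have h2 := hc.inv_right
    have h3 := hc.inv_inv
    split_ifs
    exacts [h3, h1, h2, hc])

theorem flip_self (v : V) : flipHom Γ v (rg Γ v) = (rg Γ v)⁻¹ := by
  rw [flipHom, raagLift_rg, if_pos rfl]

theorem flip_ne {u v : V} (h : u ≠ v) : flipHom Γ v (rg Γ u) = rg Γ u := by
  rw [flipHom, raagLift_rg, if_neg h]

theorem flip_flip (v : V) : (flipHom Γ v).comp (flipHom Γ v) = MonoidHom.id _ := by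
  apply raag_hom_ext
  intro s
  by_cases h : s = v
  · subst h
    rw [MonoidHom.comp_apply, flip_self, map_inv, flip_self, inv_inv]; rfl
  · rw [MonoidHom.comp_apply, flip_ne h, flip_ne h]; rfl

theorem flip_comm (u v : V) : (flipHom Γ v).comp (flipHom Γ u) =
    (flipHom Γ u).comp (flipHom Γ v) := by
  apply raag_hom_ext
  intro s
  rw [MonoidHom.comp_apply, MonoidHom.comp_apply]
  by_cases h : s = v <;> by_cases h' : s = u
  · subst h; subst h'; rfl
  · subst h
    rw [flip_ne h', flip_self, map_inv, flip_ne h']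
  · subst h'
    rw [flip_ne h, flip_self, map_inv, flip_ne h]
  · rw [flip_ne h, flip_ne h', flip_ne h]

variable (Γ) in
/-- inversion of one generator as an automorphism -/
noncomputable def flipAut (v : V) : MulAut (RAAG Γ) :=
  MonoidHom.toMulEquiv (flipHom Γ v) (flipHom Γ v) (flip_flip v) (flip_flip v)

theorem flipAut_apply (v : V) (x : RAAG Γ) : flipAut Γ v x = flipHom Γ v x := rfl

theorem flipAut_sq (v : V) : flipAut Γ v * flipAut Γ v = 1 := by
  refine MulEquiv.ext fun x => ?_
  exact DFunLike.congr_fun (flip_flip v) x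

theorem flipAut_comm (u v : V) : flipAut Γ v * flipAut Γ u = flipAut Γ u * flipAut Γ v := by
  refine MulEquiv.ext fun x => ?_
  exact DFunLike.congr_fun (flip_comm u v) x

theorem emb_injective : Function.Injective (emb Γ) := by
  classical
  let G := RAAG Γ
  let T := RAAG Γ ⋊[MonoidHom.id (MulAut (RAAG Γ))] MulAut (RAAG Γ)
  let gen : V × Bool → T := fun s => ⟨if s.2 = true then rg Γ s.1 else 1, flipAut Γ s.1⟩
  let ψ : Cox (dbl Γ) →* T := coxLift gen
    (by
      rintro ⟨v, i⟩
      refine SemidirectProduct.ext ?_ ?_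
      · change (if i = true then rg Γ v else 1) * flipHom Γ v (if i = true then rg Γ v else 1) = 1
        cases i <;> simp [flip_self]
      · exact flipAut_sq v)
    (by
      rintro ⟨v, i⟩ ⟨w, j⟩ ⟨h1, h2⟩
      dsimp only at h1 h2
      refine SemidirectProduct.ext ?_ ?_
      · change (if i = true then rg Γ v else 1) * flipHom Γ v (if j = true then rg Γ w else 1) =
          (if j = true then rg Γ w else 1) * flipHom Γ w (if i = true then rg Γ v else 1)
        cases i <;> cases j <;> simp [flip_ne h1, flip_ne h1.symm]
        exact rg_comm (h2 rfl rfl)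
      · exact flipAut_comm w v)
  have hψ : ∀ s, ψ (cs (dbl Γ) s) = gen s := fun s => coxLift_cs _ _ _ s
  have hcomp : ψ.comp (emb Γ) = SemidirectProduct.inl := by
    apply raag_hom_ext
    intro v
    rw [MonoidHom.comp_apply, emb_rg, map_mul, hψ, hψ]
    refine SemidirectProduct.ext ?_ ?_
    · change rg Γ v * flipHom Γ v 1 = rg Γ v
      simp
    · exact flipAut_sq v
  have : Function.Injective (ψ.comp (emb Γ)) := by
    rw [hcomp]; exact SemidirectProduct.inl_injective
  exact Function.Injective.of_comp (f := ψ) this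

theorem conj_emb (v : V) (g : RAAG Γ) :
    cs (dbl Γ) (v, false) * emb Γ g = emb Γ (flipHom Γ v g) * cs (dbl Γ) (v, false) := by
  have : (MulAut.conj (cs (dbl Γ) (v, false))).toMonoidHom.comp (emb Γ) =
      (emb Γ).comp (flipHom Γ v) := by
    apply raag_hom_ext
    intro u
    rw [MonoidHom.comp_apply, MonoidHom.comp_apply, emb_rg]
    change cs (dbl Γ) (v, false) * _ * (cs (dbl Γ) (v, false))⁻¹ = _
    rw [cs_inv]
    by_cases h : u = v
    · subst h
      rw [flip_self, map_inv, emb_rg, mul_inv_rev, cs_inv, cs_inv, mul_assoc, mul_assoc, cs_sq,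
        mul_one]
    · rw [flip_ne h, emb_rg]
      have h1 : ∀ i, Commute (cs (dbl Γ) (v, false)) (cs (dbl Γ) (u, i)) := fun i =>
        cs_comm (dbl_adj.2 ⟨Ne.symm h, fun h => by simp at h⟩)
      have h2 := (h1 true).mul_right (h1 false)
      rw [h2.eq, mul_assoc, cs_sq, mul_one]
  have h2 := DFunLike.congr_fun this g
  change cs (dbl Γ) (v, false) * _ * (cs (dbl Γ) (v, false))⁻¹ = emb Γ (flipHom Γ v g) at h2
  rw [← h2]; group

theorem emb_finiteIndex [Finite V] : (emb Γ).range.FiniteIndex := by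
  let e : V → Cox (dbl Γ) := fun v => cs (dbl Γ) (v, false)
  let T := Subgroup.closure (Set.range e)
  have hcomm : ∀ x ∈ Set.range e, ∀ y ∈ Set.range e, x * y = y * x := by
    rintro _ ⟨u, rfl⟩ _ ⟨v, rfl⟩
    by_cases h : u = v
    · rw [h]
    · exact cs_comm (dbl_adj.2 ⟨h, fun h => by simp at h⟩)
  letI : CommGroup T := Subgroup.closureCommGroupOfComm hcomm
  have hfg : Group.FG T := by
    rw [Group.fg_iff_subgroup_fg]
    exact (Subgroup.fg_iff _).2 ⟨Set.range e, rfl, Set.finite_range e⟩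
  have hsq : ∀ t (ht : t ∈ T), t * t = 1 := by
    intro t ht
    induction ht using Subgroup.closure_induction with
    | mem x hx => obtain ⟨v, rfl⟩ := hx; exact cs_sq _
    | one => simp
    | mul x y hx hy h1 h2 =>
      have : x * y = y * x := congrArg Subtype.val (mul_comm (⟨x, hx⟩ : T) ⟨y, hy⟩)
      calc x * y * (x * y) = x * y * (y * x) := by rw [this]
        _ = x * (y * y) * x := by group
        _ = 1 := by rw [h2, mul_one, h1]
    | inv x hx h => rw [← mul_inv_rev, h, inv_one]
  have htor : Monoid.IsTorsion T := by
    intro t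
    rw [isOfFinOrder_iff_pow_eq_one]
    exact ⟨2, by norm_num, Subtype.ext (by rw [pow_two]; exact hsq _ t.2)⟩
  have hfin : Finite T := CommGroup.finite_of_fg_torsion T htor
  have hdec : ∀ w : Cox (dbl Γ), ∃ g, ∃ t ∈ T, w = emb Γ g * t := by
    intro w
    have hT : ∀ v, e v ∈ T := fun v => Subgroup.subset_closure ⟨v, rfl⟩
    induction w using cox_induction with
    | h1 => exact ⟨1, 1, one_mem _, by simp⟩
    | hs s w ih =>
      obtain ⟨g, t, ht, rfl⟩ := ih
      obtain ⟨v, i⟩ := s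
      cases i
      · refine ⟨flipHom Γ v g, e v * t, mul_mem (hT v) ht, ?_⟩
        rw [← mul_assoc, conj_emb, mul_assoc]
      · refine ⟨rg Γ v * flipHom Γ v g, e v * t, mul_mem (hT v) ht, ?_⟩
        rw [map_mul, emb_rg, mul_assoc, mul_assoc, ← mul_assoc (emb Γ (flipHom Γ v g)), ← conj_emb]
        simp only [← mul_assoc]
        rw [mul_assoc (cs (dbl Γ) (v, true)) (cs (dbl Γ) (v, false)), cs_sq, mul_one]
  have hsurj : Function.Surjective (fun t : T => ((t : Cox (dbl Γ)) : Cox (dbl Γ) ⧸ (emb Γ).range)) := by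
    intro q
    obtain ⟨w, rfl⟩ := QuotientGroup.mk_surjective q
    obtain ⟨g, t, ht, h⟩ := hdec w⁻¹
    refine ⟨⟨t⁻¹, inv_mem ht⟩, ?_⟩
    rw [QuotientGroup.eq]
    refine ⟨g⁻¹, ?_⟩
    have : w = (emb Γ g * t)⁻¹ := by rw [← h, inv_inv]
    rw [this, map_inv]
    simp
  have := Finite.of_surjective _ hsurj
  exact Subgroup.finiteIndex_of_finite_quotient

theorem raag_main [Finite V] (H : Subgroup (RAAG Γ)) (hHf : H.FiniteIndex) (x y : RAAG Γ) :
    ∃ L : Subgroup (RAAG Γ), L.Normal ∧ L.FiniteIndex ∧ ∀ g : RAAG Γ,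
      (g * y * g⁻¹) * x⁻¹ ∈ L → ∃ k, k * y * k⁻¹ = x ∧ g⁻¹ * k ∈ H := by
  have h1 : (H.map (emb Γ)).FiniteIndex := by
    constructor
    rw [Subgroup.index_map_of_injective _ emb_injective]
    exact mul_ne_zero hHf.index_ne_zero (emb_finiteIndex).index_ne_zero
  obtain ⟨L, hLn, hLf, hL⟩ := cox_main (H.map (emb Γ)).normalCore inferInstance inferInstance
    (emb Γ x) (emb Γ y)
  refine ⟨L.comap (emb Γ), inferInstance, finiteIndex_comap _ _ hLf, fun g hg => ?_⟩
  rw [Subgroup.mem_comap] at hg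
  obtain ⟨k, hk, hkH⟩ := hL (emb Γ g) (by simpa using hg)
  obtain ⟨h, hh, he⟩ := Subgroup.normalCore_le _ hkH
  have hk2 : k = emb Γ (g * h) := by rw [map_mul, he]; group
  refine ⟨g * h, emb_injective ?_, by simpa using hh⟩
  rw [← hk, hk2]; simp

end raag

end HCS


namespace HCS

section free

open FreeGroup

variable {Y : Type} [DecidableEq Y]

theorem toWord_mk_of_isReduced {L : List (Y × Bool)} (h : IsReduced L) : (mk L).toWord = L := by
  rw [toWord_mk, h.reduce_eq]

theorem toWord_mul_letter (g : FreeGroup Y) (a : Y × Bool) :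
    toWord (g * mk [a]) = toWord g ++ [a] ∨
    ∃ L, toWord g = L ++ [(a.1, !a.2)] ∧ toWord (g * mk [a]) = L := by
  have hred : IsReduced g.toWord := isReduced_toWord
  have hg : g = mk g.toWord := mk_toWord.symm
  rcases List.eq_nil_or_concat g.toWord with h | ⟨L, b, h⟩
  · left
    rw [h] at hg
    rw [h, hg, ← one_eq_mk, one_mul, toWord_mk_of_isReduced IsReduced.singleton]; rfl
  · by_cases hb : b.1 = a.1 → b.2 = a.2
    · left
      have : IsReduced (g.toWord ++ [a]) := by
        rw [FreeGroup.IsReduced, List.isChain_append]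
        refine ⟨hred, List.isChain_singleton _, ?_⟩
        intro x hx y hy
        rw [h] at hx
        simp at hx hy
        subst hx; subst hy
        exact hb
      conv_lhs => rw [hg]
      rw [mul_mk, toWord_mk_of_isReduced this]
    · right
      have hba : b = (a.1, !a.2) := by
        obtain ⟨b1, b2⟩ := b
        obtain ⟨a1, a2⟩ := a
        simp only [Classical.not_imp] at hb
        obtain ⟨h1, h2⟩ := hb
        refine Prod.ext h1 ?_
        clear h hg hred
        revert h2
        cases a2 <;> cases b2 <;> simp
      refine ⟨L, by rw [h, hba, List.concat_eq_append], ?_⟩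
      have hL : IsReduced L := by
        rw [h] at hred
        rw [List.concat_eq_append] at hred
        exact (List.isChain_append.1 hred).1
      have e : g * mk [a] = mk L := by
        rw [hg, h, hba, List.concat_eq_append, ← mul_mk, mul_assoc]
        have : (mk [(a.1, !a.2)] : FreeGroup Y) = (mk [a])⁻¹ := by
          simp [inv_mk, invRev]
        rw [this, inv_mul_cancel, mul_one]
      rw [e, toWord_mk_of_isReduced hL]

theorem head_mul (n : ℕ) : ∀ f g : FreeGroup Y, f.toWord.length = n → n < g.toWord.length →
    (toWord (g * f)).head? = (toWord g).head? := by
  induction n with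
  | zero =>
    intro f g hf _
    have : f = 1 := toWord_eq_nil_iff.1 (List.length_eq_zero_iff.1 hf)
    rw [this, mul_one]
  | succ n ih =>
    intro f g hf hg
    cases hw : f.toWord with
    | nil => rw [hw] at hf; simp at hf
    | cons a L =>
      have hred : IsReduced f.toWord := isReduced_toWord
      rw [hw] at hred
      have hL : IsReduced L := List.IsChain.tail hred
      have hf' : f = mk [a] * mk L := by
        rw [mul_mk, List.singleton_append, ← hw, mk_toWord]
      have hlen : L.length = n := by rw [hw] at hf; simpa using hf
      have hlen2 : (mk L).toWord.length = n := by rw [toWord_mk_of_isReduced hL, hlen]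
      rw [hf', ← mul_assoc]
      rcases toWord_mul_letter g a with h | ⟨M, h1, h2⟩
      · rw [ih (mk L) (g * mk [a]) hlen2 (by rw [h]; simp; omega), h]
        cases hgw : g.toWord with
        | nil => rw [hgw] at hg; simp at hg
        | cons b K => rfl
      · rw [h1] at hg
        simp at hg
        rw [ih (mk L) (g * mk [a]) hlen2 (by rw [h2]; omega), h1, h2]
        cases M with
        | nil => simp at hg
        | cons b K => rfl

theorem toWord_letter_mul (f : FreeGroup Y) (a : Y × Bool)
    (h : f.toWord.head? ≠ some (a.1, !a.2)) : toWord (mk [a] * f) = a :: toWord f := by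
  have hred : IsReduced f.toWord := isReduced_toWord
  have hr : IsReduced (a :: f.toWord) := by
    cases hw : f.toWord with
    | nil => exact IsReduced.singleton
    | cons b L =>
      rw [hw] at hred h
      rw [isReduced_cons_cons]
      refine ⟨?_, hred⟩
      intro h1
      by_contra h2
      apply h
      obtain ⟨b1, b2⟩ := b
      obtain ⟨a1, a2⟩ := a
      cases a2 <;> cases b2 <;> simp_all
  conv_lhs => rw [← mk_toWord (x := f)]
  rw [mul_mk, List.singleton_append, toWord_mk_of_isReduced hr]

/-- An element commuting with a basis element starts with the corresponding letter. -/
theorem head_of_commute {f : FreeGroup Y} {j : Y} (h : of j * f = f * of j) {a : Y × Bool}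
    (ha : f.toWord.head? = some a) : a.1 = j := by
  by_contra hne
  have h1 := toWord_letter_mul f (j, true) (by
    rw [ha]; intro hh; apply hne; rw [Option.some.inj hh])
  change toWord (of j * f) = _ at h1
  rw [h] at h1
  rcases toWord_mul_letter f (j, true) with h2 | ⟨L, h2, h3⟩
  · change toWord (f * of j) = _ at h2
    rw [h1] at h2
    cases hw : f.toWord with
    | nil => rw [hw] at ha; simp at ha
    | cons b K =>
      rw [hw] at h2 ha
      simp at h2 ha
      apply hne
      rw [← ha, ← h2.1]
  · change toWord (f * of j) = _ at h3
    rw [h1] at h3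
    rw [← h3] at h2
    have := congrArg List.length h2
    simp only [List.length_append, List.length_cons, List.length_nil] at this
    omega

theorem eq_one_of_commute {f : FreeGroup Y} {i j : Y} (hij : i ≠ j) (hi : of i * f = f * of i)
    (hj : of j * f = f * of j) : f = 1 := by
  by_contra hne
  have : f.toWord ≠ [] := fun h => hne (toWord_eq_nil_iff.1 h)
  obtain ⟨a, L, hL⟩ := List.exists_cons_of_ne_nil this
  have ha : f.toWord.head? = some a := by rw [hL]; rfl
  exact hij ((head_of_commute hi ha).symm.trans (head_of_commute hj ha))

theorem exists_head (R : Subgroup (FreeGroup Y)) (hR : R.Normal) {r : FreeGroup Y} (hr : r ∈ R)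
    (hr1 : r ≠ 1) (a : Y × Bool) (f : FreeGroup Y) :
    ∃ t ∈ R, (toWord (t * f)).head? = some a := by
  -- a cyclically reduced element
  obtain ⟨L, hLcyc, hLne, hLR⟩ : ∃ L : List (Y × Bool), IsCyclicallyReduced L ∧ L ≠ [] ∧
      mk L ∈ R := by
    refine ⟨reduceCyclically r.toWord, reduceCyclically.isCyclicallyReduced isReduced_toWord, ?_, ?_⟩
    · intro h
      have := reduceCyclically.conj_conjugator_reduceCyclically r.toWord
      rw [h] at this
      apply hr1
      rw [← mk_toWord (x := r), ← this, List.append_nil, ← mul_mk, ← inv_mk, mul_inv_cancel]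
    · have := reduceCyclically.conj_conjugator_reduceCyclically r.toWord
      have h2 : r = mk (reduceCyclically.conjugator r.toWord) * mk (reduceCyclically r.toWord) *
        (mk (reduceCyclically.conjugator r.toWord))⁻¹ := by
        rw [inv_mk, mul_mk, mul_mk, this, mk_toWord]
      have h3 := hR.conj_mem r hr (mk (reduceCyclically.conjugator r.toWord))⁻¹
      generalize mk (reduceCyclically.conjugator r.toWord) = c at h2 h3
      generalize mk (reduceCyclically r.toWord) = d at h2 ⊢
      rw [h2] at h3
      convert h3 using 1
      group
  have hpow : ∀ k : ℕ, ((mk L) ^ k).toWord = (List.replicate k L).flatten := by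
    intro k
    rw [pow_mk, toWord_mk_of_isReduced (hLcyc.flatten_replicate k).isReduced]
  have hlenL : 1 ≤ L.length := by
    rcases L with _ | ⟨b, L⟩
    · exact absurd rfl hLne
    · simp
  have hlen : ∀ k : ℕ, k ≤ ((mk L) ^ k).toWord.length := by
    intro k
    rw [hpow k]
    simp only [List.length_flatten, List.map_replicate, List.sum_replicate, smul_eq_mul]
    exact Nat.le_mul_of_pos_right _ hlenL
  set k := f.toWord.length + 2 with hk
  -- choice of sign
  obtain ⟨t, htR, htl, hth⟩ : ∃ t ∈ R, k ≤ t.toWord.length ∧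
      t.toWord.head? ≠ some (a.1, !a.2) := by
    by_cases h : ((mk L) ^ k).toWord.head? = some (a.1, !a.2)
    · refine ⟨((mk L) ^ k)⁻¹, inv_mem (pow_mem hLR _), ?_, ?_⟩
      · rw [toWord_inv, invRev_length]; exact hlen k
      · rw [toWord_inv]
        intro h2
        have hc := hLcyc.flatten_replicate k
        rw [← hpow] at hc
        have h3 : ((mk L) ^ k).toWord.getLast? = some (a.1, a.2) := by
          rw [invRev, List.head?_reverse, List.getLast?_map] at h2
          obtain ⟨b, hb, hb2⟩ := Option.map_eq_some_iff.1 h2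
          rw [hb]
          obtain ⟨b1, b2⟩ := b
          simp at hb2
          rw [hb2.1, hb2.2]
        have := hc.2 _ h3 _ h rfl
        simp at this
    · exact ⟨(mk L) ^ k, pow_mem hLR _, hlen k, h⟩
  refine ⟨mk [a] * t * (mk [a])⁻¹, hR.conj_mem t htR _, ?_⟩
  have h1 := toWord_letter_mul t a hth
  have hinv : ((mk [a])⁻¹ * f).toWord.length ≤ f.toWord.length + 1 := by
    have := norm_mul_le (mk [a])⁻¹ f
    have h2 : FreeGroup.norm (mk [a])⁻¹ ≤ 1 := by rw [norm_inv_eq]; exact norm_mk_le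
    simp only [FreeGroup.norm] at this h2
    omega
  rw [mul_assoc, head_mul _ _ _ rfl (by rw [h1, List.length_cons]; omega), h1]
  rfl

end free

end HCS


namespace HCS

section kill

variable {V : Type} {Γ : SimpleGraph V}

open Classical in
variable (Γ) in
/-- The endomorphism killing the generators in `A`. -/
noncomputable def kill (A : Set V) : RAAG Γ →* RAAG Γ :=
  raagLift (fun u => if u ∈ A then 1 else rg Γ u) (by
    intro s t h
    have := rg_comm h
    split_ifs <;> simp [this])

theorem kill_mem {A : Set V} {u : V} (h : u ∈ A) : kill Γ A (rg Γ u) = 1 := by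
  rw [kill, raagLift_rg, if_pos h]

theorem kill_self {u : V} : kill Γ {u} (rg Γ u) = 1 := kill_mem (Set.mem_singleton u)

theorem kill_not_mem {A : Set V} {u : V} (h : u ∉ A) : kill Γ A (rg Γ u) = rg Γ u := by
  rw [kill, raagLift_rg, if_neg h]

theorem kill_union (A B : Set V) (g : RAAG Γ) : kill Γ A (kill Γ B g) = kill Γ (A ∪ B) g := by
  have : (kill Γ A).comp (kill Γ B) = kill Γ (A ∪ B) := by
    apply raag_hom_ext
    intro s
    rw [MonoidHom.comp_apply]
    by_cases hB : s ∈ B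
    · rw [kill_mem hB, map_one, kill_mem (Set.mem_union_right A hB)]
    · rw [kill_not_mem hB]
      by_cases hA : s ∈ A
      · rw [kill_mem hA, kill_mem (Set.mem_union_left B hA)]
      · rw [kill_not_mem hA, kill_not_mem (by rintro (h | h) <;> contradiction)]
  exact DFunLike.congr_fun this g

theorem kill_empty (g : RAAG Γ) : kill Γ ∅ g = g := by
  have : kill Γ ∅ = MonoidHom.id _ := raag_hom_ext fun s => kill_not_mem (by simp)
  exact DFunLike.congr_fun this g

theorem kill_kill (A : Set V) (g : RAAG Γ) : kill Γ A (kill Γ A g) = kill Γ A g := by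
  rw [kill_union, Set.union_self]

theorem kill_eq_self {S A : Set V} (h : ∀ u ∈ S, u ∉ A) {g : RAAG Γ}
    (hg : g ∈ raagVertexSubgroup Γ S) : kill Γ A g = g := by
  have : raagVertexSubgroup Γ S ≤ (kill Γ A).eqLocus (MonoidHom.id _) := by
    rw [raagVertexSubgroup, Subgroup.closure_le]
    rintro _ ⟨u, hu, rfl⟩
    exact kill_not_mem (h u hu)
  exact this hg

theorem kill_eq_one {S A : Set V} (h : S ⊆ A) {g : RAAG Γ}
    (hg : g ∈ raagVertexSubgroup Γ S) : kill Γ A g = 1 := by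
  have : raagVertexSubgroup Γ S ≤ (kill Γ A).ker := by
    rw [raagVertexSubgroup, Subgroup.closure_le]
    rintro _ ⟨u, hu, rfl⟩
    exact kill_mem (h hu)
  exact this hg

theorem rg_zpow_ne_one (u : V) {i : ℤ} (hi : i ≠ 0) : rg Γ u ^ i ≠ 1 := by
  intro h
  have := congrArg (raagLift (Γ := Γ) (fun _ => Multiplicative.ofAdd (1 : ℤ))
    (fun _ _ _ => rfl)) h
  rw [map_zpow, raagLift_rg, map_one (raagLift _ _), ← ofAdd_zsmul] at this
  apply hi
  simpa using this

theorem rg_ne_one (u : V) : rg Γ u ≠ 1 := by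
  have := rg_zpow_ne_one (Γ := Γ) u (i := 1) one_ne_zero
  rwa [zpow_one] at this

variable (Γ) in
/-- The subgroup generated by the link of a vertex. -/
def lk (v : V) : Subgroup (RAAG Γ) := raagVertexSubgroup Γ {u | Γ.Adj v u}

theorem rg_mem_lk {v u : V} (h : Γ.Adj v u) : rg Γ u ∈ lk Γ v :=
  Subgroup.subset_closure ⟨u, h, rfl⟩

theorem lk_comm {v : V} {g : RAAG Γ} (hg : g ∈ lk Γ v) : g * rg Γ v = rg Γ v * g := by
  have : lk Γ v ≤ Subgroup.centralizer {rg Γ v} := by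
    rw [lk, raagVertexSubgroup, Subgroup.closure_le]
    rintro _ ⟨u, hu, rfl⟩
    rw [SetLike.mem_coe, Subgroup.mem_centralizer_singleton_iff]
    exact rg_comm hu.symm
  exact Subgroup.mem_centralizer_singleton_iff.1 (this hg)

theorem kill_lk {v : V} {g : RAAG Γ} (hg : g ∈ lk Γ v) : kill Γ {v} g = g :=
  kill_eq_self (fun u hu h => by rw [Set.mem_singleton_iff] at h; subst h; exact Γ.loopless.irrefl _ hu) hg

theorem kill_lk' {u v : V} (huv : ¬ Γ.Adj v u) {g : RAAG Γ} (hg : g ∈ lk Γ v) :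
    kill Γ {u} g = g :=
  kill_eq_self (fun w hu h => by rw [Set.mem_singleton_iff] at h; subst h; exact huv hu) hg

theorem not_mem_lk {u v : V} (huv : ¬ Γ.Adj v u) : rg Γ u ∉ lk Γ v := by
  intro h
  have := kill_lk' huv h
  rw [kill_self] at this
  exact rg_ne_one u this.symm

variable (Γ) in
/-- stabilizer -/
noncomputable def stabP (v : V) : Subgroup (RAAG Γ) := (lk Γ v).comap (kill Γ {v})

variable (Γ) in
/-- basis -/
noncomputable abbrev YY (v : V) : Type := RAAG Γ ⧸ stabP Γ v

variable (Γ) in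
/-- the class of an element -/
noncomputable abbrev cls (v : V) (g : RAAG Γ) : YY Γ v := (g : RAAG Γ ⧸ stabP Γ v)

theorem cls_eq {v : V} {g h : RAAG Γ} : cls Γ v g = cls Γ v h ↔
    kill Γ {v} (g⁻¹ * h) ∈ lk Γ v := QuotientGroup.eq

theorem cls_kill (v : V) (g : RAAG Γ) : cls Γ v (kill Γ {v} g) = cls Γ v g := by
  rw [cls_eq, map_mul, map_inv, kill_kill, inv_mul_cancel]; exact one_mem _

theorem smul_cls (v : V) (g h : RAAG Γ) : g • cls Γ v h = cls Γ v (g * h) := rfl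

variable (Γ) in
/-- action on the free group -/
noncomputable def act (v : V) : RAAG Γ →* MulAut (FreeGroup (YY Γ v)) where
  toFun g := FreeGroup.freeGroupCongr (MulAction.toPerm g)
  map_one' := by
    refine MulEquiv.ext fun f => ?_
    have : (FreeGroup.freeGroupCongr (MulAction.toPerm (1 : RAAG Γ)) :
      FreeGroup (YY Γ v) ≃* _).toMonoidHom = MonoidHom.id _ := by
      apply FreeGroup.ext_hom
      intro a
      rw [MulEquiv.coe_toMonoidHom, FreeGroup.freeGroupCongr_apply, FreeGroup.map.of]
      simp
    exact DFunLike.congr_fun this f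
  map_mul' g h := by
    refine MulEquiv.ext fun f => ?_
    have : (FreeGroup.freeGroupCongr (MulAction.toPerm (g * h)) :
      FreeGroup (YY Γ v) ≃* _).toMonoidHom =
      ((FreeGroup.freeGroupCongr (MulAction.toPerm g) :
        FreeGroup (YY Γ v) ≃* _).toMonoidHom).comp
      (FreeGroup.freeGroupCongr (MulAction.toPerm h) :
        FreeGroup (YY Γ v) ≃* _).toMonoidHom := by
      apply FreeGroup.ext_hom
      intro a
      rw [MonoidHom.comp_apply, MulEquiv.coe_toMonoidHom, MulEquiv.coe_toMonoidHom,
        MulEquiv.coe_toMonoidHom, FreeGroup.freeGroupCongr_apply, FreeGroup.freeGroupCongr_apply,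
        FreeGroup.freeGroupCongr_apply, FreeGroup.map.of, FreeGroup.map.of, FreeGroup.map.of]
      simp [mul_smul]
    exact DFunLike.congr_fun this f

theorem act_of (v : V) (g : RAAG Γ) (y : YY Γ v) :
    act Γ v g (FreeGroup.of y) = FreeGroup.of (g • y) := by
  change FreeGroup.freeGroupCongr (MulAction.toPerm g) (FreeGroup.of y) = _
  rw [FreeGroup.freeGroupCongr_apply, FreeGroup.map.of]
  rfl

open Classical in
variable (Γ) in
/-- The decomposition as a semidirect product. -/
noncomputable def theta (v : V) : RAAG Γ →* FreeGroup (YY Γ v) ⋊[act Γ v] RAAG Γ :=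
  raagLift (fun u => if u = v then ⟨FreeGroup.of (cls Γ v 1), 1⟩ else ⟨1, rg Γ u⟩) (by
    have key : ∀ t, Γ.Adj v t → t ≠ v →
        act Γ v (rg Γ t) (FreeGroup.of (cls Γ v 1)) = FreeGroup.of (cls Γ v 1) := by
      intro t h hne
      rw [act_of, smul_cls, mul_one]
      congr 1
      symm
      rw [cls_eq, inv_one, one_mul, kill_not_mem (by simpa using hne)]
      exact rg_mem_lk h
    intro s t h
    by_cases hs : s = v <;> by_cases ht : t = v
    · subst hs; subst ht; rfl
    · subst hs
      rw [if_pos rfl, if_neg ht]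
      refine SemidirectProduct.ext ?_ ?_
      · simp [key t h ht]
      · simp
    · subst ht
      rw [if_pos rfl, if_neg hs]
      refine SemidirectProduct.ext ?_ ?_
      · simp [key s h.symm hs]
      · simp
    · rw [if_neg hs, if_neg ht]
      refine SemidirectProduct.ext ?_ ?_
      · simp
      · simpa using rg_comm h)

theorem theta_self (v : V) : theta Γ v (rg Γ v) = ⟨FreeGroup.of (cls Γ v 1), 1⟩ := by
  rw [theta, raagLift_rg, if_pos rfl]

theorem theta_ne {u v : V} (h : u ≠ v) : theta Γ v (rg Γ u) = ⟨1, rg Γ u⟩ := by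
  rw [theta, raagLift_rg, if_neg h]

theorem theta_right (v : V) (g : RAAG Γ) : (theta Γ v g).right = kill Γ {v} g := by
  have : (SemidirectProduct.rightHom).comp (theta Γ v) = kill Γ {v} := by
    apply raag_hom_ext
    intro s
    rw [MonoidHom.comp_apply]
    by_cases h : s = v
    · subst h
      rw [theta_self, kill_self]; rfl
    · rw [theta_ne h, kill_not_mem (by simpa using h)]; rfl
  exact DFunLike.congr_fun this g

variable (Γ) in
/-- The cocycle. -/
noncomputable def kap (v : V) (g : RAAG Γ) : FreeGroup (YY Γ v) := (theta Γ v g).left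

theorem kap_mul (v : V) (g h : RAAG Γ) :
    kap Γ v (g * h) = kap Γ v g * act Γ v (kill Γ {v} g) (kap Γ v h) := by
  rw [kap, map_mul, SemidirectProduct.mul_left, theta_right]; rfl

theorem kap_one (v : V) : kap Γ v 1 = 1 := by rw [kap, map_one]; rfl

theorem kap_self (v : V) : kap Γ v (rg Γ v) = FreeGroup.of (cls Γ v 1) := by
  rw [kap, theta_self]

theorem kap_ne {u v : V} (h : u ≠ v) : kap Γ v (rg Γ u) = 1 := by
  rw [kap, theta_ne h]

theorem kap_kill (v : V) (g : RAAG Γ) : kap Γ v (kill Γ {v} g) = 1 := by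
  have : (theta Γ v).comp (kill Γ {v}) = SemidirectProduct.inr.comp (kill Γ {v}) := by
    apply raag_hom_ext
    intro s
    rw [MonoidHom.comp_apply, MonoidHom.comp_apply]
    by_cases h : s = v
    · subst h
      rw [kill_self, map_one, map_one]
    · rw [kill_not_mem (by simpa using h), theta_ne h]; rfl
  have := DFunLike.congr_fun this g
  rw [kap]
  change theta Γ v (kill Γ {v} g) = _ at this
  rw [this]; rfl

variable (Γ) in
/-- conjugates of `v` -/
noncomputable def sigFun (v : V) : YY Γ v → RAAG Γ :=
  Quotient.lift (fun g => kill Γ {v} g * rg Γ v * (kill Γ {v} g)⁻¹) (by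
    intro a b hab
    have h1 : kill Γ {v} (a⁻¹ * b) ∈ lk Γ v := QuotientGroup.leftRel_apply.1 hab
    have h2 := lk_comm h1
    have h3 : kill Γ {v} b = kill Γ {v} a * kill Γ {v} (a⁻¹ * b) := by
      rw [← map_mul, mul_inv_cancel_left]
    rw [h3]
    generalize kill Γ {v} (a⁻¹ * b) = c at h2
    rw [mul_assoc _ c, h2, mul_inv_rev]
    group)

variable (Γ) in
/-- section -/
noncomputable def sig (v : V) : FreeGroup (YY Γ v) →* RAAG Γ := FreeGroup.lift (sigFun Γ v)

theorem sig_of (v : V) (g : RAAG Γ) : sig Γ v (FreeGroup.of (cls Γ v g)) =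
    kill Γ {v} g * rg Γ v * (kill Γ {v} g)⁻¹ := by
  rw [sig, FreeGroup.lift_apply_of]; rfl

theorem kill_sig (v : V) (f : FreeGroup (YY Γ v)) : kill Γ {v} (sig Γ v f) = 1 := by
  have : (kill Γ {v}).comp (sig Γ v) = 1 := by
    apply FreeGroup.ext_hom
    intro y
    obtain ⟨g, rfl⟩ := QuotientGroup.mk_surjective y
    rw [MonoidHom.comp_apply]
    change kill Γ {v} (sig Γ v (FreeGroup.of (cls Γ v g))) = 1
    rw [sig_of, map_mul, map_mul, kill_self, mul_one, map_inv, mul_inv_cancel]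
  exact DFunLike.congr_fun this f

theorem sig_act (v : V) (g : RAAG Γ) (f : FreeGroup (YY Γ v)) :
    sig Γ v (act Γ v (kill Γ {v} g) f) = kill Γ {v} g * sig Γ v f * (kill Γ {v} g)⁻¹ := by
  have : (sig Γ v).comp (act Γ v (kill Γ {v} g)).toMonoidHom =
      (MulAut.conj (kill Γ {v} g)).toMonoidHom.comp (sig Γ v) := by
    apply FreeGroup.ext_hom
    intro y
    obtain ⟨h, rfl⟩ := QuotientGroup.mk_surjective y
    change sig Γ v (act Γ v (kill Γ {v} g) (FreeGroup.of (cls Γ v h))) =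
      kill Γ {v} g * sig Γ v (FreeGroup.of (cls Γ v h)) * (kill Γ {v} g)⁻¹
    rw [act_of, smul_cls, sig_of, sig_of, map_mul, kill_kill, mul_inv_rev]
    group
  exact DFunLike.congr_fun this f

theorem sig_kap (v : V) (g : RAAG Γ) : sig Γ v (kap Γ v g) * kill Γ {v} g = g := by
  let φ : RAAG Γ →* RAAG Γ := MonoidHom.mk' (fun g => sig Γ v (kap Γ v g) * kill Γ {v} g) (by
    intro a b
    rw [kap_mul, map_mul, sig_act, map_mul]
    group)
  have : φ = MonoidHom.id _ := by
    apply raag_hom_ext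
    intro s
    change sig Γ v (kap Γ v (rg Γ s)) * kill Γ {v} (rg Γ s) = rg Γ s
    by_cases h : s = v
    · subst h
      rw [kap_self, sig_of, kill_self]; simp
    · rw [kap_ne h, kill_not_mem (by simpa using h)]; simp
  exact DFunLike.congr_fun this g

theorem kap_sig (v : V) (f : FreeGroup (YY Γ v)) : kap Γ v (sig Γ v f) = f := by
  have : (theta Γ v).comp (sig Γ v) = SemidirectProduct.inl := by
    apply FreeGroup.ext_hom
    intro y
    obtain ⟨g, rfl⟩ := QuotientGroup.mk_surjective y
    change theta Γ v (sig Γ v (FreeGroup.of (cls Γ v g))) =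
      SemidirectProduct.inl (FreeGroup.of (cls Γ v g))
    rw [sig_of]
    refine SemidirectProduct.ext ?_ ?_
    · change kap Γ v _ = FreeGroup.of (cls Γ v g)
      have h0 := kap_mul v (kill Γ {v} g) (kill Γ {v} g)⁻¹
      rw [mul_inv_cancel, kap_one, kap_kill, one_mul, kill_kill] at h0
      rw [kap_mul, kap_mul, kap_kill, one_mul, kill_kill, kap_self, act_of, smul_cls, mul_one,
        cls_kill, map_mul, kill_kill, kill_self, mul_one, ← h0, mul_one]
    · rw [theta_right, map_mul, map_mul, kill_self, mul_one, map_inv, mul_inv_cancel]; rfl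
  have := DFunLike.congr_fun this f
  rw [kap]
  change theta Γ v (sig Γ v f) = _ at this
  rw [this]; rfl

theorem kap_sig_mul (v : V) (f : FreeGroup (YY Γ v)) (g : RAAG Γ) :
    kap Γ v (sig Γ v f * g) = f * kap Γ v g := by
  rw [kap_mul, kap_sig, kill_sig, map_one]; rfl

theorem mem_lk_of {v : V} {g : RAAG Γ} (h1 : kap Γ v g = 1) (h2 : cls Γ v g = cls Γ v 1) :
    g ∈ lk Γ v := by
  have h3 := sig_kap v g
  rw [h1, map_one, one_mul] at h3
  rw [eq_comm, cls_eq, inv_one, one_mul, h3] at h2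
  exact h2

end kill

end HCS


namespace HCS

section cross

variable {V : Type} {Γ : SimpleGraph V}

open Classical in
variable (Γ) in
/-- A half space. -/
noncomputable def half (v : V) : Set (RAAG Γ) :=
  {g | (kap Γ v g).toWord.head? = some (cls Γ v 1, true)}

theorem kap_mul_ne {u v : V} (h : u ≠ v) (g : RAAG Γ) : kap Γ v (g * rg Γ u) = kap Γ v g := by
  rw [kap_mul, kap_ne h, map_one, mul_one]

theorem kap_mul_self (v : V) (g : RAAG Γ) :
    kap Γ v (g * rg Γ v) = kap Γ v g * FreeGroup.of (cls Γ v g) := by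
  rw [kap_mul, kap_self, act_of, smul_cls, mul_one, cls_kill]

theorem cross {v s : V} {g : RAAG Γ} (h : ¬ (g ∈ half Γ v ↔ g * rg Γ s ∈ half Γ v)) :
    g ∈ lk Γ v := by
  classical
  by_cases hs : s = v
  · subst hs
    simp only [half, Set.mem_ofPred_eq, kap_mul_self] at h
    rcases toWord_mul_letter (kap Γ s g) (cls Γ s g, true) with h1 | ⟨L, h1, h2⟩
    · change FreeGroup.toWord (kap Γ s g * FreeGroup.of (cls Γ s g)) = _ at h1
      rw [h1] at h
      cases hw : (kap Γ s g).toWord with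
      | nil =>
        rw [hw] at h
        simp only [List.head?_nil, List.nil_append, List.head?_cons] at h
        have : cls Γ s g = cls Γ s 1 := by
          by_contra hne
          apply h
          simp [hne]
        exact mem_lk_of (FreeGroup.toWord_eq_nil_iff.1 hw) this
      | cons b K => exact absurd (by rw [hw]; rfl) h
    · change FreeGroup.toWord (kap Γ s g * FreeGroup.of (cls Γ s g)) = _ at h2
      rw [h1, h2] at h
      cases L with
      | nil => exact absurd (by simp) h
      | cons b K => exact absurd (by rfl) h
  · exact absurd (by simp only [half, Set.mem_ofPred_eq, kap_mul_ne hs]) h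

theorem cross_word (v : V) (p : RAAG Γ) : ∃ U : Set (RAAG Γ), U.Finite ∧
    ∀ g, ¬ (g ∈ half Γ v ↔ g * p ∈ half Γ v) → ∃ u ∈ U, g * u ∈ lk Γ v := by
  induction p using raag_induction with
  | h1 => exact ⟨∅, Set.finite_empty, fun g h => absurd (by rw [mul_one]) h⟩
  | hs s w ih =>
    obtain ⟨U, hU, hg⟩ := ih
    refine ⟨insert 1 (Set.image (fun u => rg Γ s * u) U), (hU.image _).insert _, fun g h => ?_⟩
    by_cases h1 : g ∈ half Γ v ↔ g * rg Γ s ∈ half Γ v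
    · rw [h1, ← mul_assoc] at h
      obtain ⟨u, hu, hu2⟩ := hg _ h
      exact ⟨rg Γ s * u, Or.inr ⟨u, hu, rfl⟩, by rwa [← mul_assoc]⟩
    · exact ⟨1, Or.inl rfl, by rw [mul_one]; exact cross h1⟩
  | hs' s w ih =>
    obtain ⟨U, hU, hg⟩ := ih
    refine ⟨insert (rg Γ s)⁻¹ (Set.image (fun u => (rg Γ s)⁻¹ * u) U), (hU.image _).insert _,
      fun g h => ?_⟩
    by_cases h1 : g * (rg Γ s)⁻¹ ∈ half Γ v ↔ g * (rg Γ s)⁻¹ * rg Γ s ∈ half Γ v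
    · rw [inv_mul_cancel_right] at h1
      rw [← h1, ← mul_assoc] at h
      obtain ⟨u, hu, hu2⟩ := hg _ h
      exact ⟨(rg Γ s)⁻¹ * u, Or.inr ⟨u, hu, rfl⟩, by rwa [← mul_assoc]⟩
    · exact ⟨(rg Γ s)⁻¹, Or.inl rfl, cross h1⟩

theorem finiteIndex_of_cross (v : V) (N : Subgroup (RAAG Γ)) [hN : N.Normal] (hfg : N.FG)
    (h : ∀ g, (∃ n ∈ N, n * g ∈ half Γ v) ∧ (∃ n ∈ N, n * g ∉ half Γ v)) :
    (N ⊔ lk Γ v).FiniteIndex := by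
  obtain ⟨X, hX⟩ := hfg
  choose U hU hUg using cross_word (Γ := Γ) v
  let W : Set (RAAG Γ) := ⋃ x ∈ X, U x
  have hW : W.Finite := X.finite_toSet.biUnion fun x _ => hU x
  have key : ∀ g, ∃ n ∈ N, ∃ u ∈ W, g * n * u ∈ lk Γ v := by
    intro g
    by_contra hcon
    push Not at hcon
    have hstep : ∀ n ∈ N, ∀ x ∈ X, (g * n ∈ half Γ v ↔ g * n * x ∈ half Γ v) := by
      intro n hn x hx
      by_contra h2
      obtain ⟨u, hu, hu2⟩ := hUg x _ h2
      exact hcon n hn u (Set.mem_biUnion hx hu) hu2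
    have hconst : ∀ n ∈ N, (g ∈ half Γ v ↔ g * n ∈ half Γ v) := by
      intro n hn
      rw [← hX] at hn
      induction hn using Subgroup.closure_induction_right with
      | one => rw [mul_one]
      | mul_right a ha x hx ih =>
        rw [hX] at ha
        rw [ih, hstep a ha x hx, mul_assoc]
      | mul_inv_cancel a ha x hx ih =>
        have hxN : x ∈ N := by rw [← hX]; exact Subgroup.subset_closure hx
        rw [hX] at ha
        rw [ih, hstep (a * x⁻¹) (N.mul_mem ha (N.inv_mem hxN)) x hx, ← mul_assoc,
          inv_mul_cancel_right]
    obtain ⟨⟨n1, hn1, h1⟩, ⟨n2, hn2, h2⟩⟩ := h g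
    have e : ∀ n, n * g = g * (g⁻¹ * n * g) := fun n => by group
    have hm : ∀ n ∈ N, g⁻¹ * n * g ∈ N := fun n hn => by
      have := hN.conj_mem n hn g⁻¹
      rwa [inv_inv] at this
    rw [e] at h1 h2
    rw [← hconst _ (hm _ hn1)] at h1
    rw [← hconst _ (hm _ hn2)] at h2
    exact h2 h1
  have : Finite W := hW
  have hsurj : Function.Surjective
      (fun u : W => ((u : RAAG Γ) : RAAG Γ ⧸ (N ⊔ lk Γ v))) := by
    intro q
    obtain ⟨g, rfl⟩ := QuotientGroup.mk_surjective q
    obtain ⟨n, hn, u, hu, h1⟩ := key g⁻¹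
    refine ⟨⟨u, hu⟩, ?_⟩
    dsimp only
    rw [QuotientGroup.eq]
    have : u⁻¹ * g = (u⁻¹ * n * u⁻¹⁻¹) * (g⁻¹ * n * u)⁻¹ := by group
    rw [this]
    exact mul_mem ((le_sup_left : N ≤ N ⊔ lk Γ v) (hN.conj_mem n hn _))
      ((le_sup_right : lk Γ v ≤ N ⊔ lk Γ v) (inv_mem h1))
  have := Finite.of_surjective _ hsurj
  exact Subgroup.finiteIndex_of_finite_quotient

theorem finiteIndex_of_ker (v : V) (N : Subgroup (RAAG Γ)) [hN : N.Normal] (hfg : N.FG)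
    {n : RAAG Γ} (hn : n ∈ N) (hn1 : n ≠ 1) (hk : kill Γ {v} n = 1) :
    (N ⊔ lk Γ v).FiniteIndex := by
  classical
  apply finiteIndex_of_cross v N hfg
  intro g
  have hR : (N.comap (sig Γ v)).Normal := hN.comap _
  have hs := sig_kap v n
  rw [hk, mul_one] at hs
  have hr : kap Γ v n ∈ N.comap (sig Γ v) := by
    rw [Subgroup.mem_comap, hs]; exact hn
  have hr1 : kap Γ v n ≠ 1 := by
    intro h
    rw [h, map_one] at hs
    exact hn1 hs.symm
  constructor
  · obtain ⟨t, ht, h⟩ := exists_head _ hR hr hr1 (cls Γ v 1, true) (kap Γ v g)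
    refine ⟨sig Γ v t, ht, ?_⟩
    simp only [half, Set.mem_ofPred_eq, kap_sig_mul]
    convert h
  · obtain ⟨t, ht, h⟩ := exists_head _ hR hr hr1 (cls Γ v 1, false) (kap Γ v g)
    refine ⟨sig Γ v t, ht, ?_⟩
    simp only [half, Set.mem_ofPred_eq, kap_sig_mul]
    intro h2
    have h3 := h.symm.trans (by convert h2)
    simp at h3

/-- goodness -/
def Good (N : Subgroup (RAAG Γ)) (v : V) : Prop := ∃ m ∈ N, kill Γ {v} m ≠ m

theorem good_step (N : Subgroup (RAAG Γ)) [hN : N.Normal] {u w : V} (hne : u ≠ w)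
    (hadj : ¬ Γ.Adj u w) (hw : Good N w) : Good N u := by
  by_contra hu
  simp only [Good, not_exists, not_and, not_not] at hu
  obtain ⟨m, hm, hm2⟩ := hw
  apply hm2
  have hc : m * rg Γ u * m⁻¹ * (rg Γ u)⁻¹ ∈ N := by
    have h1 : m * (rg Γ u * m⁻¹ * (rg Γ u)⁻¹) ∈ N :=
      N.mul_mem hm (hN.conj_mem _ (N.inv_mem hm) _)
    simpa only [mul_assoc] using h1
  have h2 := hu _ hc
  rw [map_mul, map_mul, map_mul, map_inv, map_inv, kill_self, hu m hm] at h2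
  have h3 : m * rg Γ u = rg Γ u * m := by
    have h4 : m * rg Γ u * m⁻¹ * (rg Γ u)⁻¹ = 1 := by rw [← h2]; group
    exact comm_of_eq_one h4
  have hk : kap Γ u m = 1 := by
    rw [← hu m hm]; exact kap_kill u m
  have h5 := congrArg (kap Γ u) h3
  rw [kap_mul_self, hk, one_mul, kap_mul, hk, map_one, mul_one, kap_self] at h5
  have h6 := FreeGroup.of_injective h5
  exact kill_lk' hadj (mem_lk_of hk h6)

theorem fi_nonadj (N : Subgroup (RAAG Γ)) [hN : N.Normal] (hfg : N.FG) {u v : V}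
    (hadj : ¬ Γ.Adj v u) (hne : u ≠ v) (hg : Good N v) : (N ⊔ lk Γ v).FiniteIndex := by
  classical
  by_contra hcon
  have hker : ∀ n ∈ N, kill Γ {v} n = 1 → n = 1 := by
    intro n hn hk
    by_contra h1
    exact hcon (finiteIndex_of_ker v N hfg hn h1 hk)
  obtain ⟨m, hm, hm2⟩ := hg
  apply hm2
  -- m commutes with the kernel
  have hcomm : ∀ f : FreeGroup (YY Γ v), m * sig Γ v f = sig Γ v f * m := by
    intro f
    have h1 : m * sig Γ v f * m⁻¹ * (sig Γ v f)⁻¹ ∈ N := by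
      have h1 : m * (sig Γ v f * m⁻¹ * (sig Γ v f)⁻¹) ∈ N :=
        N.mul_mem hm (hN.conj_mem _ (N.inv_mem hm) _)
      simpa only [mul_assoc] using h1
    have h2 := hker _ h1 (by simp [kill_sig])
    exact comm_of_eq_one h2
  have h3 : ∀ f, kap Γ v m * act Γ v (kill Γ {v} m) f = f * kap Γ v m := by
    intro f
    have := congrArg (kap Γ v) (hcomm f)
    rwa [kap_mul, kap_sig, kap_sig_mul] at this
  -- the permutation is trivial
  have h4 : ∀ y : YY Γ v, kill Γ {v} m • y = y := by
    intro y
    have := congrArg (FreeGroup.lift (fun z : YY Γ v => if z = y then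
      Multiplicative.ofAdd (1 : ℤ) else 1)) (h3 (FreeGroup.of y))
    rw [map_mul, map_mul, mul_comm, act_of, FreeGroup.lift_apply_of, FreeGroup.lift_apply_of,
      if_pos rfl] at this
    have := mul_right_cancel this
    by_contra hne
    rw [if_neg hne] at this
    have := congrArg Multiplicative.toAdd this
    simp at this
  have h5 : ∀ y : YY Γ v, FreeGroup.of y * kap Γ v m = kap Γ v m * FreeGroup.of y := by
    intro y
    rw [← h3, act_of, h4]
  have h6 : cls Γ v 1 ≠ cls Γ v (rg Γ u) := by
    rw [Ne, cls_eq, inv_one, one_mul, kill_not_mem (by simpa using hne)]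
    exact not_mem_lk hadj
  have h7 := eq_one_of_commute h6 (h5 _) (h5 _)
  have h8 := sig_kap v m
  rwa [h7, map_one, one_mul] at h8

theorem fi_cone (N : Subgroup (RAAG Γ)) [hN : N.Normal] {v : V}
    (hadj : ∀ u, u ≠ v → Γ.Adj v u) (hg : Good N v) : (N ⊔ lk Γ v).FiniteIndex := by
  have hdec : ∀ g : RAAG Γ, ∃ (i : ℤ) (h : RAAG Γ), h ∈ lk Γ v ∧ g = rg Γ v ^ i * h := by
    intro g
    induction g using raag_induction with
    | h1 => exact ⟨0, 1, one_mem _, by simp⟩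
    | hs s w ih =>
      obtain ⟨i, h, hh, rfl⟩ := ih
      by_cases hs : s = v
      · subst hs
        exact ⟨1 + i, h, hh, by rw [zpow_add, zpow_one, mul_assoc]⟩
      · have hc : Commute (rg Γ s) (rg Γ v) := rg_comm (hadj s hs).symm
        refine ⟨i, rg Γ s * h, mul_mem (rg_mem_lk (hadj s hs)) hh, ?_⟩
        rw [← mul_assoc, ← mul_assoc, (hc.zpow_right i).eq]
    | hs' s w ih =>
      obtain ⟨i, h, hh, rfl⟩ := ih
      by_cases hs : s = v
      · subst hs
        exact ⟨-1 + i, h, hh, by rw [zpow_add, zpow_neg_one, mul_assoc]⟩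
      · have hc : Commute (rg Γ s) (rg Γ v) := rg_comm (hadj s hs).symm
        refine ⟨i, (rg Γ s)⁻¹ * h, mul_mem (inv_mem (rg_mem_lk (hadj s hs))) hh, ?_⟩
        rw [← mul_assoc, ← mul_assoc, (hc.inv_left.zpow_right i).eq]
  obtain ⟨m, hm, hm2⟩ := hg
  obtain ⟨i, h, hh, rfl⟩ := hdec m
  have hi : i ≠ 0 := by
    rintro rfl
    apply hm2
    rw [zpow_zero, one_mul, kill_lk hh]
  have hT : rg Γ v ^ i ∈ N ⊔ lk Γ v := by
    have h1 := mul_mem ((le_sup_left : N ≤ N ⊔ lk Γ v) hm)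
      ((le_sup_right : lk Γ v ≤ N ⊔ lk Γ v) (inv_mem hh))
    rwa [mul_inv_cancel_right] at h1
  have hfin : (Set.Ico 0 |i|).Finite := Set.finite_Ico _ _
  have : Finite (Set.Ico 0 |i|) := hfin
  have hsurj : Function.Surjective
      (fun u : Set.Ico 0 |i| => ((rg Γ v ^ (u : ℤ) : RAAG Γ) : RAAG Γ ⧸ (N ⊔ lk Γ v))) := by
    intro q
    obtain ⟨g, rfl⟩ := QuotientGroup.mk_surjective q
    obtain ⟨j, k, hk, rfl⟩ := hdec g
    refine ⟨⟨j % i, Int.emod_nonneg _ hi, Int.emod_lt_abs _ hi⟩, ?_⟩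
    dsimp only
    rw [QuotientGroup.eq]
    have : (rg Γ v ^ (j % i))⁻¹ * (rg Γ v ^ j * k) = (rg Γ v ^ i) ^ (j / i) * k := by
      rw [← mul_assoc, ← zpow_neg, ← zpow_add, ← zpow_mul]
      congr 2
      have := Int.emod_add_mul_ediv j i
      omega
    rw [this]
    exact mul_mem (zpow_mem hT _) ((le_sup_right : lk Γ v ≤ N ⊔ lk Γ v) hk)
  have := Finite.of_surjective _ hsurj
  exact Subgroup.finiteIndex_of_finite_quotient

theorem fi_of_good (N : Subgroup (RAAG Γ)) [hN : N.Normal] (hfg : N.FG) {v : V}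
    (hg : Good N v) : (N ⊔ lk Γ v).FiniteIndex := by
  by_cases h : ∀ u, u ≠ v → Γ.Adj v u
  · exact fi_cone N h hg
  · push Not at h
    obtain ⟨u, hne, hadj⟩ := h
    exact fi_nonadj N hfg hadj hne hg

theorem good_reach (N : Subgroup (RAAG Γ)) [hN : N.Normal] {w v : V} (hw : Good N w)
    (hreach : Relation.ReflTransGen Γᶜ.Adj w v) : Good N v := by
  induction hreach with
  | refl => exact hw
  | tail hac hcd ih =>
    have h1 := (SimpleGraph.compl_adj _ _ _).1 hcd
    exact good_step N h1.1.symm (fun h => h1.2 h.symm) ih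

/-- the join decomposition coming from the complement -/
theorem good_of_full [Finite V] (N : Subgroup (RAAG Γ)) [hN : N.Normal]
    (hfull : IsFullSubgroup Γ N) (v : V) : Good N v := by
  classical
  have hfinC : Finite Γᶜ.ConnectedComponent :=
    Finite.of_surjective Γᶜ.connectedComponentMk Quot.mk_surjective
  obtain ⟨k, ⟨e⟩⟩ := Finite.exists_equiv_fin Γᶜ.ConnectedComponent
  let P : Fin k → Set V := fun i => (e.symm i).supp
  have hP : IsJoinDecomposition Γ P := by
    refine ⟨fun i => (e.symm i).nonempty_supp, ?_, ?_, ?_⟩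
    · intro w
      refine ⟨e (Γᶜ.connectedComponentMk w), ?_, ?_⟩
      · simp [P]
      · intro j hj
        have : Γᶜ.connectedComponentMk w = e.symm j := hj
        rw [this, Equiv.apply_symm_apply]
    · intro i j hij a ha b hb
      by_contra hab
      apply hij
      have ha' : Γᶜ.connectedComponentMk a = e.symm i := ha
      have hb' : Γᶜ.connectedComponentMk b = e.symm j := hb
      apply e.symm.injective
      rw [← ha', ← hb']
      by_cases h : a = b
      · rw [h]
      · exact SimpleGraph.ConnectedComponent.sound
          (SimpleGraph.Adj.reachable ((SimpleGraph.compl_adj _ _ _).2 ⟨h, hab⟩))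
    · rintro i ⟨A, B, ⟨a, ha⟩, ⟨b, hb⟩, hdisj, hAB, hadj⟩
      have haP : a ∈ P i := by rw [← hAB]; exact Or.inl ha
      have hbP : b ∈ P i := by rw [← hAB]; exact Or.inr hb
      have hreach : Γᶜ.Reachable a b := by
        apply SimpleGraph.ConnectedComponent.exact
        exact (show Γᶜ.connectedComponentMk a = e.symm i from haP).trans
          (show Γᶜ.connectedComponentMk b = e.symm i from hbP).symm
      have hstay : ∀ c, Γᶜ.Reachable a c → c ∈ A := by
        intro c hc
        rw [SimpleGraph.reachable_iff_reflTransGen] at hc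
        induction hc with
        | refl => exact ha
        | tail hac hcd ih =>
          rename_i c d
          have hdP : d ∈ P i := by
            change Γᶜ.connectedComponentMk d = e.symm i
            rw [← (show Γᶜ.connectedComponentMk a = e.symm i from haP)]
            apply SimpleGraph.ConnectedComponent.sound
            rw [SimpleGraph.reachable_comm, SimpleGraph.reachable_iff_reflTransGen]
            exact hac.tail hcd
          rw [← hAB] at hdP
          rcases hdP with h | h
          · exact h
          · exact absurd (hadj c ih d h) ((SimpleGraph.compl_adj _ _ _).1 hcd).2
      exact Set.disjoint_left.1 hdisj (hstay b hreach) hb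
  have hne := hfull k P hP (e (Γᶜ.connectedComponentMk v))
  obtain ⟨⟨n, hnN, hnP⟩, hn1⟩ := (Subgroup.ne_bot_iff_exists_ne_one).1 hne
  have hn1' : n ≠ 1 := fun h => hn1 (Subtype.ext h)
  set C := P (e (Γᶜ.connectedComponentMk v)) with hC
  obtain ⟨w, hwC, hw⟩ : ∃ w ∈ C, Good N w := by
    by_contra hcon
    push Not at hcon
    have hfix : ∀ w ∈ C, kill Γ {w} n = n := by
      intro w hw
      have := hcon w hw
      simp only [Good, not_exists, not_and, not_not] at this
      exact this n hnN
    have hall : kill Γ C n = n := by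
      refine Set.Finite.induction_on_subset (motive := fun S _ => kill Γ S n = n) C
        (Set.toFinite C) (kill_empty n) ?_
      intro a S ha hS _ ih
      rw [Set.insert_eq, ← kill_union, ih, hfix a ha]
    rw [kill_eq_one (le_refl C) hnP] at hall
    exact hn1' hall.symm
  have hreach : Γᶜ.Reachable w v := by
    apply SimpleGraph.ConnectedComponent.exact
    have : Γᶜ.connectedComponentMk w = e.symm (e (Γᶜ.connectedComponentMk v)) := hwC
    rwa [Equiv.symm_apply_apply] at this
  rw [SimpleGraph.reachable_iff_reflTransGen] at hreach
  exact good_reach N hw hreach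

theorem fi_all [Finite V] (N : Subgroup (RAAG Γ)) [hN : N.Normal] (hfg : N.FG)
    (hfull : IsFullSubgroup Γ N) (v : V) : (N ⊔ lk Γ v).FiniteIndex :=
  fi_of_good N hfg (good_of_full N hfull v)

end cross

end HCS


namespace HCS

section sepa

theorem ab_rf {A : Type*} [CommGroup A] [Group.FG A] {z : A} (hz : z ≠ 1) :
    ∃ B : Subgroup A, B.FiniteIndex ∧ z ∉ B := by
  obtain ⟨c, hc⟩ := CharacterModule.exists_character_apply_ne_zero_of_ne_zero
    (A := Additive A) (a := Additive.ofMul z) (by simpa using hz)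
  let φ : A →* Multiplicative (AddCircle (1 : ℚ)) :=
    MonoidHom.mk' (fun a => Multiplicative.ofAdd (c (Additive.ofMul a))) (by
      intro a b
      rw [ofMul_mul, map_add, ofAdd_add])
  have hφ : ∀ a, φ a = Multiplicative.ofAdd (c (Additive.ofMul a)) := fun a => rfl
  refine ⟨φ.ker, ?_, ?_⟩
  · have ht : IsMulTorsion (A ⧸ φ.ker) := by
      intro q
      obtain ⟨a, rfl⟩ := QuotientGroup.mk_surjective q
      rw [isOfFinOrder_iff_pow_eq_one]
      obtain ⟨r, hr⟩ := QuotientAddGroup.mk_surjective (c (Additive.ofMul a))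
      refine ⟨r.den, r.den_pos, ?_⟩
      rw [← QuotientGroup.mk_pow, QuotientGroup.eq_one_iff, MonoidHom.mem_ker, map_pow, hφ, ← hr,
        ← ofAdd_nsmul, ← QuotientAddGroup.mk_nsmul]
      rw [ofAdd_eq_one, QuotientAddGroup.eq_zero_iff, AddSubgroup.mem_zmultiples_iff]
      refine ⟨r.num, ?_⟩
      rw [zsmul_eq_mul, nsmul_eq_mul, mul_one, mul_comm, Rat.mul_den_eq_num]
    have := CommGroup.finite_of_fg_isMulTorsion _ ht
    exact Subgroup.finiteIndex_of_finite_quotient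
  · rw [MonoidHom.mem_ker, hφ, ofAdd_eq_one]
    exact hc

theorem central_rf {Q : Type*} [Group Q] [Group.FG Q] (hZ : (Subgroup.center Q).FiniteIndex)
    {q : Q} (hq : q ≠ 1) : ∃ M : Subgroup Q, M.Normal ∧ M.FiniteIndex ∧ q ∉ M := by
  by_cases hqZ : q ∈ Subgroup.center Q
  · let inst0 : CommGroup (Subgroup.center Q) :=
      { (inferInstance : Group (Subgroup.center Q)) with
        mul_comm := fun a b => Subtype.ext (Subgroup.mem_center_iff.1 b.2 a) }
    obtain ⟨B, hB, hB2⟩ := ab_rf (A := Subgroup.center Q) (z := ⟨q, hqZ⟩)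
      (fun h => hq (congrArg Subtype.val h))
    refine ⟨B.map (Subgroup.center Q).subtype, ⟨?_⟩, ⟨?_⟩, ?_⟩
    · rintro _ ⟨b, hb, rfl⟩ g
      have : g * (b : Q) * g⁻¹ = b := by
        rw [Subgroup.mem_center_iff.1 b.2 g, mul_inv_cancel_right]
      rw [Subgroup.coe_subtype, this]
      exact ⟨b, hb, rfl⟩
    · rw [Subgroup.index_map_subtype]
      exact mul_ne_zero hB.index_ne_zero hZ.index_ne_zero
    · rintro ⟨b, hb, h⟩
      apply hB2
      have : b = ⟨q, hqZ⟩ := Subtype.ext h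
      rwa [← this]
  · exact ⟨_, inferInstance, hZ, hqZ⟩

theorem central_sep {Q : Type*} [Group Q] [Group.FG Q] (hZ : (Subgroup.center Q).FiniteIndex)
    (D : Subgroup Q) {g : Q} (hg : g ∉ D) :
    ∃ M : Subgroup Q, M.Normal ∧ M.FiniteIndex ∧ ∀ d ∈ D, ∀ m ∈ M, g ≠ d * m := by
  let D0 : Subgroup Q := D ⊓ Subgroup.center Q
  have hD0 : D0.Normal := by
    constructor
    intro n hn g
    have : g * n * g⁻¹ = n := by
      rw [Subgroup.mem_center_iff.1 hn.2 g, mul_inv_cancel_right]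
    rwa [this]
  have hZ1 : (Subgroup.center (Q ⧸ D0)).FiniteIndex := by
    have h1 : Subgroup.center Q ≤ (Subgroup.center (Q ⧸ D0)).comap (QuotientGroup.mk' D0) := by
      intro z hz
      rw [Subgroup.mem_comap, Subgroup.mem_center_iff]
      intro q
      obtain ⟨a, rfl⟩ := QuotientGroup.mk'_surjective D0 q
      rw [← map_mul, ← map_mul, Subgroup.mem_center_iff.1 hz]
    have h2 := Subgroup.finiteIndex_of_le h1
    constructor
    rw [← Subgroup.index_comap_of_surjective _ (QuotientGroup.mk'_surjective D0)]
    exact h2.index_ne_zero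
  have hfi : (D0.subgroupOf D).FiniteIndex := by
    have : D0.subgroupOf D = (Subgroup.center Q).subgroupOf D := by
      simp [D0]
    rw [this]
    infer_instance
  have hfin : Finite (D ⧸ D0.subgroupOf D) := Subgroup.finite_quotient_of_finiteIndex
  have hex : ∀ d : D ⧸ D0.subgroupOf D, ∃ M : Subgroup (Q ⧸ D0), M.Normal ∧ M.FiniteIndex ∧
      (((d.out : D) : Q)⁻¹ * g : Q) ∉ M.comap (QuotientGroup.mk' D0) := by
    intro d
    apply central_rf hZ1
    rw [Ne, QuotientGroup.mk'_apply, QuotientGroup.eq_one_iff]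
    intro h
    apply hg
    have := D.mul_mem (d.out : D).2 h.1
    rwa [mul_inv_cancel_left] at this
  choose M hM1 hM2 hM3 using hex
  refine ⟨⨅ d, (M d).comap (QuotientGroup.mk' D0), ?_, ?_, ?_⟩
  · exact Subgroup.normal_iInf_normal fun d => (hM1 d).comap _
  · exact Subgroup.finiteIndex_iInf fun d => finiteIndex_comap _ _ (hM2 d)
  · rintro d hd m hm rfl
    let q : D ⧸ D0.subgroupOf D := ((⟨d, hd⟩ : D) : D ⧸ D0.subgroupOf D)
    apply hM3 q
    have h1 : (q.out)⁻¹ * (⟨d, hd⟩ : D) ∈ D0.subgroupOf D := by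
      rw [← QuotientGroup.eq]
      exact QuotientGroup.out_eq' q
    have h2 : ((q.out : D) : Q)⁻¹ * d ∈ D0 := h1
    rw [Subgroup.mem_iInf] at hm
    rw [← mul_assoc]
    refine mul_mem ?_ (hm q)
    rw [Subgroup.mem_comap, QuotientGroup.mk'_apply, (QuotientGroup.eq_one_iff _).2 h2]
    exact one_mem _

theorem central_sep_finite {Q : Type*} [Group Q] [Group.FG Q]
    (hZ : (Subgroup.center Q).FiniteIndex) (F : Set Q) (hF : F.Finite)
    (D : Subgroup Q) {g : Q} (hg : ∀ k ∈ F, ∀ d ∈ D, g ≠ k * d) :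
    ∃ M : Subgroup Q, M.Normal ∧ M.FiniteIndex ∧ ∀ k ∈ F, ∀ d ∈ D, ∀ m ∈ M, g ≠ k * d * m := by
  have : Finite F := hF
  have hex : ∀ k : F, ∃ M : Subgroup Q, M.Normal ∧ M.FiniteIndex ∧
      ∀ d ∈ D, ∀ m ∈ M, (k : Q)⁻¹ * g ≠ d * m := by
    intro k
    apply central_sep hZ
    intro h
    exact hg k k.2 _ h (by group)
  choose M hM1 hM2 hM3 using hex
  refine ⟨⨅ k, M k, Subgroup.normal_iInf_normal hM1, Subgroup.finiteIndex_iInf hM2, ?_⟩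
  rintro k hk d hd m hm rfl
  rw [Subgroup.mem_iInf] at hm
  exact hM3 ⟨k, hk⟩ d hd m (hm _) (by group)

/-- A finite index subgroup contains a characteristic finite index subgroup. -/
theorem exists_char {N : Type*} [Group N] [Group.FG N] (K : Subgroup N) (hK : K.FiniteIndex) :
    ∃ C : Subgroup N, C.Characteristic ∧ C.FiniteIndex ∧ C ≤ K := by
  have hfinq : Finite (N ⧸ K) := Subgroup.finite_quotient_of_finiteIndex
  have hfin : Finite (N →* Equiv.Perm (N ⧸ K)) := by
    obtain ⟨S, hS⟩ := Group.fg_def.1 (inferInstance : Group.FG N)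
    refine Finite.of_injective (fun (f : N →* Equiv.Perm (N ⧸ K)) (s : S) => f s) ?_
    intro f g h
    apply MonoidHom.eq_of_eqOn_dense hS
    intro s hs
    exact congrFun h ⟨s, hs⟩
  refine ⟨⨅ f : N →* Equiv.Perm (N ⧸ K), f.ker, ?_, ?_, ?_⟩
  · rw [Subgroup.characteristic_iff_le_comap]
    intro φ x hx
    rw [Subgroup.mem_comap, Subgroup.mem_iInf]
    rw [Subgroup.mem_iInf] at hx
    intro f
    exact hx (f.comp φ.toMonoidHom)
  · exact Subgroup.finiteIndex_iInf fun f => inferInstance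
  · refine (iInf_le _ (MulAction.toPermHom N (N ⧸ K))).trans ?_
    rw [← Subgroup.normalCore_eq_ker]
    exact Subgroup.normalCore_le K

theorem fi_sup {G : Type*} [Group G] (N C H : Subgroup G) [hN : N.Normal]
    (hC : (C.subgroupOf N).FiniteIndex) (hH : (N ⊔ H).FiniteIndex) : (C ⊔ H).FiniteIndex := by
  have h1 : Finite (N ⧸ C.subgroupOf N) := Subgroup.finite_quotient_of_finiteIndex
  have h2 : Finite (G ⧸ (N ⊔ H)) := Subgroup.finite_quotient_of_finiteIndex
  have hsurj : Function.Surjective (fun p : (G ⧸ (N ⊔ H)) × (N ⧸ C.subgroupOf N) =>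
      ((p.1.out * (p.2.out : N) : G) : G ⧸ (C ⊔ H))) := by
    intro q
    obtain ⟨g, rfl⟩ := QuotientGroup.mk_surjective q
    let a : G ⧸ (N ⊔ H) := (g : G ⧸ (N ⊔ H))
    have ha : a.out⁻¹ * g ∈ N ⊔ H := by
      rw [← QuotientGroup.eq]
      exact QuotientGroup.out_eq' a
    obtain ⟨n, hn, h, hh, e⟩ := Subgroup.mem_sup_of_normal_left.1 ha
    let b : N ⧸ C.subgroupOf N := ((⟨n, hn⟩ : N) : N ⧸ C.subgroupOf N)
    have hb : (b.out)⁻¹ * (⟨n, hn⟩ : N) ∈ C.subgroupOf N := by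
      rw [← QuotientGroup.eq]
      exact QuotientGroup.out_eq' b
    have hb2 : ((b.out : N) : G)⁻¹ * n ∈ C := hb
    refine ⟨(a, b), ?_⟩
    dsimp only
    rw [QuotientGroup.eq]
    have : (a.out * ((b.out : N) : G))⁻¹ * g = (((b.out : N) : G)⁻¹ * n) * h := by
      rw [mul_assoc, e]; group
    rw [this]
    exact Subgroup.mul_mem_sup hb2 hh
  have := Finite.of_surjective _ hsurj
  exact Subgroup.finiteIndex_of_finite_quotient

variable {V : Type} {Γ : SimpleGraph V}

theorem raag_fg [Finite V] : Group.FG (RAAG Γ) := by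
  rw [Group.fg_iff]
  exact ⟨_, raag_closure, Set.finite_range _⟩

theorem center_fi [Finite V] (C : Subgroup (RAAG Γ)) [C.Normal]
    (h : ∀ v, (C ⊔ lk Γ v).FiniteIndex) : (Subgroup.center (RAAG Γ ⧸ C)).FiniteIndex := by
  let Z : V → Subgroup (RAAG Γ) := fun v =>
    (Subgroup.centralizer {QuotientGroup.mk' C (rg Γ v)}).comap (QuotientGroup.mk' C)
  have h1 : ∀ v, C ⊔ lk Γ v ≤ Z v := by
    intro v
    rw [sup_le_iff]
    constructor
    · intro c hc
      have h0 : QuotientGroup.mk' C c = 1 := (QuotientGroup.eq_one_iff c).2 hc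
      rw [Subgroup.mem_comap, h0]
      exact one_mem _
    · intro g hg
      rw [Subgroup.mem_comap, Subgroup.mem_centralizer_singleton_iff, ← map_mul, ← map_mul,
        lk_comm hg]
  have h2 : (⨅ v, Z v).FiniteIndex := Subgroup.finiteIndex_iInf fun v => by
    have := h v
    exact Subgroup.finiteIndex_of_le (h1 v)
  have h3 : (⨅ v, Z v) ≤ (Subgroup.center (RAAG Γ ⧸ C)).comap (QuotientGroup.mk' C) := by
    intro g hg
    rw [Subgroup.mem_iInf] at hg
    rw [Subgroup.mem_comap, Subgroup.mem_center_iff]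
    intro q
    obtain ⟨a, rfl⟩ := QuotientGroup.mk'_surjective C q
    have hle : Subgroup.closure (Set.range (rg Γ)) ≤
        (Subgroup.centralizer {QuotientGroup.mk' C g}).comap (QuotientGroup.mk' C) := by
      rw [Subgroup.closure_le]
      rintro _ ⟨v, rfl⟩
      have := hg v
      rw [Subgroup.mem_comap, Subgroup.mem_centralizer_singleton_iff] at this
      rw [SetLike.mem_coe, Subgroup.mem_comap, Subgroup.mem_centralizer_singleton_iff, this]
    rw [raag_closure] at hle
    exact Subgroup.mem_centralizer_singleton_iff.1 (hle (Subgroup.mem_top a))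
  have h4 := Subgroup.finiteIndex_of_le h3
  constructor
  rw [← Subgroup.index_comap_of_surjective _ (QuotientGroup.mk'_surjective C)]
  exact h4.index_ne_zero

theorem sep_double [Finite V] (N : Subgroup (RAAG Γ)) [hN : N.Normal] (hfg : N.FG)
    (hfull : IsFullSubgroup Γ N) (K : Subgroup (RAAG Γ)) (hKN : K ≤ N)
    (hK : (K.subgroupOf N).FiniteIndex) (D : Subgroup (RAAG Γ)) {g : RAAG Γ}
    (hg : ∀ k ∈ K, ∀ d ∈ D, g ≠ k * d) :
    ∃ M : Subgroup (RAAG Γ), M.Normal ∧ M.FiniteIndex ∧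
      ∀ k ∈ K, ∀ d ∈ D, ∀ m ∈ M, g ≠ k * d * m := by
  have hNfg : Group.FG N := (Group.fg_iff_subgroup_fg N).2 hfg
  have hGfg : Group.FG (RAAG Γ) := raag_fg
  obtain ⟨C0, hC1, hC2, hC3⟩ := exists_char _ hK
  let C : Subgroup (RAAG Γ) := C0.map N.subtype
  have hCn : C.Normal := ConjAct.normal_of_characteristic_of_normal
  have hsub : C.subgroupOf N = C0 := Subgroup.comap_map_eq_self_of_injective N.subtype_injective _
  have hCK : C ≤ K := by
    rintro _ ⟨c, hc, rfl⟩
    exact hC3 hc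
  have hZ := center_fi C fun v => fi_sup N C (lk Γ v) (by rw [hsub]; exact hC2)
    (fi_all N hfg hfull v)
  have hfinK : (Set.image (QuotientGroup.mk' C) (K : Set (RAAG Γ))).Finite := by
    have hfin : Finite (N ⧸ C0) := Subgroup.finite_quotient_of_finiteIndex
    refine (Set.finite_range (fun q : N ⧸ C0 => QuotientGroup.mk' C ((q.out : N) : RAAG Γ))).subset
      ?_
    rintro _ ⟨k, hk, rfl⟩
    let b : N ⧸ C0 := ((⟨k, hKN hk⟩ : N) : N ⧸ C0)
    have hb : (b.out)⁻¹ * (⟨k, hKN hk⟩ : N) ∈ C0 := by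
      rw [← QuotientGroup.eq]
      exact QuotientGroup.out_eq' b
    refine ⟨b, ?_⟩
    dsimp only
    rw [QuotientGroup.mk'_apply, QuotientGroup.mk'_apply, QuotientGroup.eq]
    exact ⟨_, hb, rfl⟩
  obtain ⟨M, hM1, hM2, hM3⟩ := central_sep_finite hZ _ hfinK (D.map (QuotientGroup.mk' C))
    (g := QuotientGroup.mk' C g) (by
      rintro _ ⟨k, hk, rfl⟩ _ ⟨d, hd, rfl⟩ h
      rw [← map_mul, QuotientGroup.mk'_apply, QuotientGroup.mk'_apply, eq_comm,
        QuotientGroup.eq] at h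
      have h2 := hCn.conj_mem _ h d
      have h3 := K.mul_mem hk (hCK h2)
      refine hg _ h3 d hd ?_
      group)
  refine ⟨M.comap (QuotientGroup.mk' C), hM1.comap _, finiteIndex_comap _ _ hM2, ?_⟩
  rintro k hk d hd m hm rfl
  exact hM3 _ ⟨k, hk, rfl⟩ _ ⟨d, hd, rfl⟩ _ hm (by rw [map_mul, map_mul])

theorem sep_main [Finite V] (N : Subgroup (RAAG Γ)) [hN : N.Normal] (hfg : N.FG)
    (hfull : IsFullSubgroup Γ N) (K : Subgroup (RAAG Γ)) (hKN : K ≤ N)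
    (hK : (K.subgroupOf N).FiniteIndex) : ConjugacySeparable K := by
  rintro ⟨x, hx⟩ ⟨y, hy⟩ hxy
  have hnon : ∀ k ∈ K, k * y * k⁻¹ ≠ x := by
    intro k hk h
    apply hxy
    rw [isConj_comm, isConj_iff]
    exact ⟨⟨k, hk⟩, Subtype.ext h⟩
  obtain ⟨L, hL1, hL2, hL3⟩ : ∃ L : Subgroup (RAAG Γ), L.Normal ∧ L.FiniteIndex ∧
      ∀ k ∈ K, (k * y * k⁻¹) * x⁻¹ ∉ L := by
    by_cases hc : ∃ g, g * y * g⁻¹ = x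
    · obtain ⟨g, hg⟩ := hc
      obtain ⟨M, hM1, hM2, hM3⟩ := sep_double N hfg hfull K hKN hK (Subgroup.centralizer {y})
        (g := g) (by
          rintro k hk d hd rfl
          apply hnon k hk
          rw [Subgroup.mem_centralizer_singleton_iff] at hd
          rw [← hg, mul_assoc k d y, hd]
          group)
      obtain ⟨L, hL1, hL2, hL3⟩ := raag_main M hM2 x y
      refine ⟨L, hL1, hL2, fun k hk h => ?_⟩
      obtain ⟨c, hc1, hc2⟩ := hL3 k h
      -- c = k m, g = c d
      have hd : c⁻¹ * g ∈ Subgroup.centralizer {y} := by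
        rw [Subgroup.mem_centralizer_singleton_iff]
        have h1 : c * y * c⁻¹ = g * y * g⁻¹ := hc1.trans hg.symm
        have h2 : g * y = c * y * c⁻¹ * g := by rw [h1]; group
        rw [mul_assoc, h2]; group
      have hm : (c⁻¹ * g)⁻¹ * (k⁻¹ * c) * (c⁻¹ * g)⁻¹⁻¹ ∈ M := hM1.conj_mem _ hc2 _
      exact hM3 k hk _ hd _ hm (by group)
    · obtain ⟨L, hL1, hL2, hL3⟩ := raag_main (⊤ : Subgroup (RAAG Γ)) inferInstance x y
      refine ⟨L, hL1, hL2, fun k hk h => ?_⟩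
      obtain ⟨c, hc1, -⟩ := hL3 k h
      exact hc ⟨c, hc1⟩
  have hfinL : Finite (RAAG Γ ⧸ L) := Subgroup.finite_quotient_of_finiteIndex
  let φ : K →* RAAG Γ ⧸ L := (QuotientGroup.mk' L).comp K.subtype
  refine ⟨φ.range, inferInstance, inferInstance, φ.rangeRestrict, ?_⟩
  intro h
  rw [isConj_comm, isConj_iff] at h
  obtain ⟨⟨_, ⟨k, rfl⟩⟩, h⟩ := h
  have h2 : φ k * φ ⟨y, hy⟩ * (φ k)⁻¹ = φ ⟨x, hx⟩ := congrArg Subtype.val h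
  apply hL3 k k.2
  rw [← QuotientGroup.eq_one_iff, QuotientGroup.mk_mul, QuotientGroup.mk_inv]
  rw [mul_inv_eq_one]
  exact h2

theorem conjSep_equiv {A B : Type} [Group A] [Group B] (e : A ≃* B) (h : ConjugacySeparable B) :
    ConjugacySeparable A := by
  intro x y hxy
  obtain ⟨Q, instQ, hQ, φ, hφ⟩ := h (e x) (e y) (fun hc => hxy (by
    rw [isConj_iff] at hc ⊢
    obtain ⟨c, hc⟩ := hc
    refine ⟨e.symm c, e.injective ?_⟩
    rw [map_mul, map_mul, map_inv, e.apply_symm_apply, hc]))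
  exact ⟨Q, instQ, hQ, φ.comp e.toMonoidHom, hφ⟩

end sepa

end HCS

theorem fg_full_normal_subgroup_of_RAAG_is_hereditarily_conjugacy_separable
    {V : Type} [Fintype V] (Γ : SimpleGraph V)
    (N : Subgroup (RAAG Γ)) [N.Normal]
    (hfg : N.FG) (hfull : IsFullSubgroup Γ N) :
    (∀ K : Subgroup ↥N, K.FiniteIndex → ConjugacySeparable ↥K) ∧
      ConjugacySeparable ↥N := by
  constructor
  · intro K hK
    refine HCS.conjSep_equiv (K.equivMapOfInjective N.subtype N.subtype_injective)
      (HCS.sep_main N hfg hfull _ ?_ ?_)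
    · rintro _ ⟨k, _, rfl⟩
      exact k.2
    · have : (K.map N.subtype).subgroupOf N = K :=
        Subgroup.comap_map_eq_self_of_injective N.subtype_injective _
      rw [this]; exact hK
  · refine HCS.sep_main N hfg hfull N le_rfl ?_
    rw [Subgroup.subgroupOf_self]
    infer_instance
end
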